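/- Let p ≡ −1 (mod 8) be a prime and let h(−2p) denote the class number of the imaginary quadratic field ℚ(√(−2p)). Then 8 ∥ h(−2p) (i.e., 8 ∣ h(−2p) and 16 ∤ h(−2p)) if and only if p ≡ −1 (mod 16) and (−1)^((p+1)/16)·(p) = −1, where (p) denotes the Jacobi symbol (2u/v) for any positive integers u, v with p = u² − 2v². -/

import Mathlib

section PartA
open Polynomial NumberField

/-- The order `ℤ[√(-2p)]`. -/
abbrev ZR (p : ℕ) := ℤ√(-(2 * (p : ℤ)))

lemma ZR_noZeroDiv {p : ℕ} (hp : 0 < p) : IsDomain (ZR p) := by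
  have hd : -(2 * (p : ℤ)) < 0 := by omega
  have : NoZeroDivisors (ZR p) := by
    constructor
    intro a b hab
    have : a.norm * b.norm = 0 := by rw [← Zsqrtd.norm_mul, hab, Zsqrtd.norm_zero]
    rcases mul_eq_zero.mp this with h | h
    · left; exact (Zsqrtd.norm_eq_zero_iff hd a).mp h
    · right; exact (Zsqrtd.norm_eq_zero_iff hd b).mp h
  exact NoZeroDivisors.to_isDomain _

lemma isDedekind_of_equiv {A B : Type*} [CommRing A] [CommRing B] [IsDedekindDomain A]
    [IsDomain B] (e : A ≃+* B) : IsDedekindDomain B := by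
  have : IsNoetherianRing B := isNoetherianRing_of_ringEquiv A e
  have : IsIntegrallyClosed B := IsIntegrallyClosed.of_equiv e
  have : Ring.DimensionLEOne B := by
    constructor
    intro P hP hPp
    have h1 : (P.comap e.toRingHom).IsPrime := Ideal.IsPrime.comap _
    have h2 : P.comap e.toRingHom ≠ ⊥ := by
      intro h
      apply hP
      rw [eq_bot_iff]
      intro x hx
      have : e.symm x ∈ P.comap e.toRingHom := by
        rw [Ideal.mem_comap]
        change e (e.symm x) ∈ P
        rwa [e.apply_symm_apply]
      rw [h] at this
      simpa using this
    have h3 := Ring.DimensionLEOne.maximalOfPrime h2 h1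
    have h4 : P = (P.comap e.toRingHom).comap e.symm := by
      ext x
      rw [Ideal.mem_comap, Ideal.mem_comap]
      change x ∈ P ↔ e (e.symm x) ∈ P
      rw [e.apply_symm_apply]
    rw [h4]
    exact Ideal.comap_isMaximal_of_equiv e.symm
  have : IsDedekindRing B := {}
  exact {}

lemma rat_int_of_sq {p : ℕ} (hp : p.Prime) (h2 : p ≠ 2) (B : ℚ) (n : ℤ)
    (h : 2 * p * B ^ 2 = n) : ∃ b : ℤ, B = b := by
  have hsq : Squarefree (2 * p) := by
    rw [Nat.squarefree_mul ((Nat.coprime_primes Nat.prime_two hp).mpr (Ne.symm h2))]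
    exact ⟨Nat.prime_two.squarefree, hp.squarefree⟩
  have hd : (B.den : ℚ) ≠ 0 := by exact_mod_cast B.den_nz
  have h1 : (2 * p : ℚ) * (B.num : ℚ) ^ 2 = n * (B.den : ℚ) ^ 2 := by
    have hB : B * B.den = B.num := Rat.mul_den_eq_num B
    rw [← h, ← hB]; ring
  have h2' : ((2 * p : ℕ) : ℤ) * B.num ^ 2 = n * (B.den : ℤ) ^ 2 := by
    push_cast; exact_mod_cast h1
  have hc : IsCoprime ((B.den : ℤ) ^ 2) (B.num ^ 2) := by
    apply IsCoprime.pow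
    rw [Int.isCoprime_iff_gcd_eq_one]
    have := B.reduced
    rw [Int.gcd_comm]; simpa [Int.gcd, Nat.Coprime] using this
  have h3 : (B.den : ℤ) ^ 2 ∣ ((2 * p : ℕ) : ℤ) :=
    hc.dvd_of_dvd_mul_right (Dvd.intro_left _ h2'.symm)
  have h4 : B.den * B.den ∣ 2 * p := by
    have : ((B.den ^ 2 : ℕ) : ℤ) ∣ ((2 * p : ℕ) : ℤ) := by push_cast; push_cast at h3; exact h3
    rw [← sq]; exact_mod_cast this
  have h5 : B.den = 1 := by simpa using hsq _ h4
  exact ⟨B.num, by rw [← Rat.num_div_den B, h5]; simp⟩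

theorem ringOfIntegers_equiv (p : ℕ) (hp : p.Prime) (hmod : p % 8 = 7)
    (F : Type*) [Field F] [NumberField F]
    (hF : Nonempty (F ≃ₐ[ℚ] AdjoinRoot (X ^ 2 + C (2 * p : ℚ)))) :
    Nonempty (𝓞 F ≃+* ZR p) := by
  obtain ⟨e⟩ := hF
  have hp0 : 0 < p := hp.pos
  set f : ℚ[X] := X ^ 2 + C (2 * p : ℚ) with hf
  have hdeg : f.natDegree = 2 := by rw [hf]; compute_degree!
  have hmon : f.Monic := by rw [hf]; monicity!
  set r := AdjoinRoot.root f with hr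
  have hr2 : r * r = -(2 * p : AdjoinRoot f) := by
    have : aeval r f = 0 := by rw [hr, AdjoinRoot.aeval_eq, AdjoinRoot.mk_self]
    simp only [hf, map_add, map_pow, aeval_X, aeval_C, map_mul, map_ofNat, map_natCast] at this
    linear_combination this
  set t : F := e.symm r with ht
  have ht2 : t * t = -(2 * p : F) := by
    rw [ht, ← map_mul, hr2]; simp only [map_neg, map_mul, map_ofNat, map_natCast]
  have hrep : ∀ x : F, ∃ a b : ℚ, x = (a : F) + (b : F) * t := by
    intro x
    obtain ⟨g, hg⟩ := AdjoinRoot.mk_surjective (e x)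
    have h1 : AdjoinRoot.mk f (g %ₘ f) = e x := by
      rw [← hg]
      apply AdjoinRoot.mk_eq_mk.mpr
      have := modByMonic_add_div g f
      exact ⟨-(g /ₘ f), by linear_combination this⟩
    have h2 : (g %ₘ f).natDegree < 2 := by
      have := natDegree_modByMonic_lt g hmon (by intro h; rw [h] at hdeg; simp at hdeg)
      omega
    have h3 : g %ₘ f = C ((g %ₘ f).coeff 1) * X + C ((g %ₘ f).coeff 0) :=
      eq_X_add_C_of_natDegree_le_one (by omega)
    refine ⟨(g %ₘ f).coeff 0, (g %ₘ f).coeff 1, ?_⟩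
    apply e.injective
    rw [← h1, h3]
    have hc : ∀ q : ℚ, AdjoinRoot.mk f (C q) = e (q : F) := by
      intro q
      rw [← eq_ratCast (algebraMap ℚ F) q, e.commutes]; rfl
    rw [map_add, map_mul, hc, hc, AdjoinRoot.mk_X, map_add, map_mul, ht, e.apply_symm_apply, hr]
    simp
    ring
  have hconj : ∃ σ : F →ₐ[ℚ] F, σ t = -t := by
    have hz : (aeval (-t) f : F) = 0 := by
      rw [hf]; simp; linear_combination ht2
    refine ⟨(AdjoinRoot.liftAlgHom f (Algebra.ofId ℚ F) (-t) hz).comp e.toAlgHom, ?_⟩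
    simp [ht, hr]
  obtain ⟨σ, hσ⟩ := hconj
  have htint : IsIntegral ℤ t := by
    refine ⟨X ^ 2 + C (2 * p : ℤ), by monicity!, ?_⟩
    simp; linear_combination ht2
  let θ : 𝓞 F := ⟨t, htint⟩
  have hθ : θ * θ = ((-(2 * (p : ℤ)) : ℤ) : 𝓞 F) := by
    apply RingOfIntegers.ext
    simp only [map_mul, map_intCast]
    change t * t = _
    rw [ht2]; push_cast; ring
  let φ : ZR p →+* 𝓞 F := Zsqrtd.lift ⟨θ, hθ⟩
  have hinj : Function.Injective φ := by
    apply Zsqrtd.lift_injective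
    intro n hn
    have := mul_self_nonneg n
    have : (0 : ℤ) < p := by exact_mod_cast hp0
    omega
  have hsurj : Function.Surjective φ := by
    rintro ⟨x, hx⟩
    obtain ⟨a, b, hab⟩ := hrep x
    have hx' : IsIntegral ℤ x := hx
    have hσx : σ x = a - b * t := by rw [hab]; simp [hσ]; ring
    have hσi : IsIntegral ℤ (σ x) := hx'.map (σ.restrictScalars ℤ)
    have hT : IsIntegral ℤ ((2 * a : ℚ)) := by
      have h := hx'.add hσi
      rw [hσx, hab] at h
      have : (a : F) + b * t + (a - b * t) = algebraMap ℚ F (2 * a) := by simp; ring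
      rw [this] at h
      exact (isIntegral_algebraMap_iff (algebraMap ℚ F).injective).mp h
    have hN : IsIntegral ℤ ((a ^ 2 + 2 * p * b ^ 2 : ℚ)) := by
      have h := hx'.mul hσi
      rw [hσx, hab] at h
      have : ((a : F) + b * t) * (a - b * t) = algebraMap ℚ F (a ^ 2 + 2 * p * b ^ 2) := by
        simp; linear_combination -(b : F) ^ 2 * ht2
      rw [this] at h
      exact (isIntegral_algebraMap_iff (algebraMap ℚ F).injective).mp h
    obtain ⟨A, hA⟩ := IsIntegrallyClosed.isIntegral_iff.mp hT
    obtain ⟨n, hn⟩ := IsIntegrallyClosed.isIntegral_iff.mp hN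
    have hA' : (A : ℚ) = 2 * a := by simpa using hA
    have hn' : (n : ℚ) = a ^ 2 + 2 * p * b ^ 2 := by simpa using hn
    obtain ⟨B, hB⟩ := rat_int_of_sq hp (by omega) (2 * b) (4 * n - A ^ 2) (by
      push_cast; rw [hA', hn']; ring)
    have key : A ^ 2 + 2 * p * B ^ 2 = 4 * n := by
      have : ((A ^ 2 + 2 * p * B ^ 2 : ℤ) : ℚ) = ((4 * n : ℤ) : ℚ) := by
        push_cast; rw [hA', hn', ← hB]; ring
      exact_mod_cast this
    have hAe : Even A := by
      have : Even (A ^ 2) := ⟨2 * n - p * B ^ 2, by linear_combination key⟩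
      exact (Int.even_pow' (by norm_num)).mp this
    obtain ⟨A', hA2⟩ := hAe
    have hpo : Odd (p : ℤ) := by rw [Int.odd_iff]; omega
    have hBe : Even B := by
      have h1 : (p : ℤ) * B ^ 2 = 2 * (n - A' ^ 2) := by
        rw [hA2] at key; linarith
      have : Even ((p : ℤ) * B ^ 2) := ⟨n - A' ^ 2, by linear_combination h1⟩
      rcases Int.even_mul.mp this with h | h
      · exact absurd h (Int.not_even_iff_odd.mpr hpo)
      · exact (Int.even_pow' (by norm_num)).mp h
    obtain ⟨B', hB2⟩ := hBe
    have ha : a = A' := by rw [hA2] at hA'; push_cast at hA'; linarith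
    have hb : b = B' := by rw [hB2] at hB; push_cast at hB; linarith
    refine ⟨⟨A', B'⟩, ?_⟩
    apply RingOfIntegers.ext
    simp only [φ, θ, Zsqrtd.lift, Equiv.coe_fn_mk, RingHom.coe_mk, MonoidHom.coe_mk, OneHom.coe_mk]
    simp only [map_add, map_mul, map_intCast]
    change (A' : F) + B' * t = x
    simp [hab, ha, hb]
  exact ⟨(RingEquiv.ofBijective φ ⟨hinj, hsurj⟩).symm⟩

end PartA

section PartB
/-- In a finite abelian group with squares of index two. -/
lemma grp_sq_dvd {G : Type*} [CommGroup G] [Finite G] (k : ℕ) (x : G)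
    (hx : orderOf x = 2 ^ (k + 1)) (hs : IsSquare x) : 2 ^ (k + 2) ∣ Nat.card G := by
  obtain ⟨y, hy⟩ := hs
  have hy2 : y ^ 2 = x := by rw [hy, sq]
  have h1 : y ^ (2 ^ (k + 1)) ≠ 1 := by
    intro h
    have : x ^ (2 ^ k) = 1 := by rw [← hy2, ← pow_mul, ← pow_succ', h]
    have := orderOf_dvd_of_pow_eq_one this
    rw [hx] at this
    exact absurd (Nat.pow_dvd_pow_iff_le_right (by norm_num) |>.mp this) (by omega)
  have h2 : y ^ (2 ^ (k + 1 + 1)) = 1 := by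
    rw [pow_succ' 2 (k + 1), pow_mul, hy2, ← hx, pow_orderOf_eq_one]
  rw [← orderOf_eq_prime_pow h1 h2]
  exact orderOf_dvd_natCard y

lemma grp_nonsq_not_dvd {G : Type*} [CommGroup G] [Finite G] (k : ℕ) (x : G)
    (hx : orderOf x = 2 ^ k) (hG : ∀ g : G, IsSquare g ∨ IsSquare (x * g)) :
    ¬ 2 ^ (k + 1) ∣ Nat.card G := by
  intro hdvd
  set H := Subgroup.zpowers x with hH
  have hcard : Nat.card G = Nat.card (G ⧸ H) * 2 ^ k := by
    rw [Subgroup.card_eq_card_quotient_mul_card_subgroup H, Nat.card_zpowers, hx]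
  have h2 : 2 ∣ Nat.card (G ⧸ H) := by
    rw [hcard, pow_succ'] at hdvd
    exact Nat.dvd_of_mul_dvd_mul_right (by positivity) hdvd
  have hsurj : Function.Surjective (fun q : G ⧸ H => q ^ 2) := by
    intro q
    obtain ⟨g, rfl⟩ := QuotientGroup.mk_surjective q
    rcases hG g with ⟨r, hr⟩ | ⟨r, hr⟩
    · exact ⟨(r : G ⧸ H), by change (r : G ⧸ H) ^ 2 = _; rw [hr, sq]; rfl⟩
    · refine ⟨(r : G ⧸ H), ?_⟩
      have : ((x : G) : G ⧸ H) = 1 := (QuotientGroup.eq_one_iff x).mpr (Subgroup.mem_zpowers x)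
      calc (r : G ⧸ H) ^ 2 = ((r * r : G) : G ⧸ H) := by rw [sq]; rfl
        _ = ((x * g : G) : G ⧸ H) := by rw [hr]
        _ = (x : G ⧸ H) * (g : G ⧸ H) := rfl
        _ = g := by rw [this, one_mul]
  have hinj := Finite.injective_iff_surjective.mpr hsurj
  obtain ⟨q, hq⟩ := exists_prime_orderOf_dvd_card' (G := G ⧸ H) 2 h2
  have : q = 1 := hinj (by
    change q ^ 2 = 1 ^ 2
    rw [one_pow, ← hq, pow_orderOf_eq_one])
  rw [this, orderOf_one] at hq
  omega

/-- Squares have index two if there is exactly one involution. -/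
lemma grp_index_two {G : Type*} [CommGroup G] [Finite G] (c : G)
    (hc : ∀ g : G, g ^ 2 = 1 → g = 1 ∨ g = c) (x g : G) (hx : ¬ IsSquare x) :
    IsSquare g ∨ IsSquare (x * g) := by
  by_contra hcon
  push Not at hcon
  obtain ⟨hg, hxg⟩ := hcon
  set f : G →* G := powMonoidHom 2 with hf
  have hker : Nat.card f.ker ≤ 2 := by
    have hsub : (f.ker : Set G) ⊆ {1, c} := by
      intro y hy
      have : y ^ 2 = 1 := by simpa [hf, MonoidHom.mem_ker] using hy
      simpa using hc y this
    have := Set.ncard_le_ncard hsub (by simp)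
    have h2 := Set.ncard_insert_le (1 : G) {c}
    have h3 : Nat.card f.ker = (f.ker : Set G).ncard := rfl
    rw [h3]
    simp only [Set.ncard_singleton] at h2
    omega
  have hmem : ∀ y : G, y ∈ f.range ↔ IsSquare y := by
    intro y
    constructor
    · rintro ⟨z, hz⟩
      exact ⟨z, by rw [← hz]; simp [hf, sq]⟩
    · rintro ⟨z, hz⟩
      exact ⟨z, by rw [hz]; simp [hf, sq]⟩
  have hidx : f.range.index ≤ 2 := by
    have h1 := Subgroup.card_mul_index f.range
    have h2 := Subgroup.card_mul_index f.ker
    rw [Subgroup.index_ker] at h2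
    have hpos : 0 < Nat.card f.range := Nat.card_pos
    have : Nat.card f.range * f.range.index = Nat.card f.range * Nat.card f.ker := by
      rw [h1, ← h2, mul_comm]
    have := Nat.eq_of_mul_eq_mul_left hpos this
    omega
  have hidx2 : f.range.index = 2 := by
    have h0 : f.range.index ≠ 0 := Subgroup.index_ne_zero_of_finite
    have h1 : f.range.index ≠ 1 := by
      intro h
      rw [Subgroup.index_eq_one] at h
      exact hx ((hmem x).mp (h ▸ Subgroup.mem_top x))
    omega
  have := (Subgroup.mul_mem_iff_of_index_two hidx2 (a := x) (b := g))
  rw [hmem, hmem, hmem] at this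
  tauto

end PartB

section PartD
open NumberTheorySymbols

lemma jac_two (w : ℕ) (hw : w % 2 = 1) : J(2 | w) = if w % 8 = 1 ∨ w % 8 = 7 then 1 else -1 := by
  rw [jacobiSym.at_two (Nat.odd_iff.mpr hw), ZMod.χ₈_nat_eq_if_mod_eight]
  simp [hw]

lemma jac_neg_one (w : ℕ) (hw : w % 2 = 1) : J(-1 | w) = if w % 4 = 1 then 1 else -1 := by
  rw [jacobiSym.at_neg_one (Nat.odd_iff.mpr hw), ZMod.χ₄_nat_eq_if_mod_four]
  simp [hw]

lemma jac_recip (a b : ℕ) (ha : a % 2 = 1) (hb : b % 4 = 3) :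
    J(a | b) = (if a % 4 = 1 then 1 else -1) * J(b | a) := by
  split_ifs with h
  · rw [jacobiSym.quadratic_reciprocity_one_mod_four h (Nat.odd_iff.mpr (by omega)), one_mul]
  · rw [jacobiSym.quadratic_reciprocity_three_mod_four (by omega) hb]; ring

lemma jac_N_s (N s : ℕ) (y : ℤ) (hN : (N : ℤ) = s ^ 2 + 2 * y ^ 2) (h : IsCoprime (s : ℤ) y) :
    J(N | s) = J(2 | s) := by
  have h1 : J(N | s) = J(2 * y ^ 2 | s) := by
    apply jacobiSym.mod_left'
    rw [hN]
    apply Int.emod_emod_of_dvd _ (dvd_refl _) |>.symm.trans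
    have : ((s : ℤ) ^ 2 + 2 * y ^ 2) % s = (2 * y ^ 2) % s := by
      rw [sq (s : ℤ), Int.mul_add_emod_self_left]
    rw [this, Int.emod_emod_of_dvd _ (dvd_refl _)]
  rw [h1, jacobiSym.mul_left, jacobiSym.sq_one', mul_one]
  rw [← Int.isCoprime_iff_gcd_eq_one]; exact h.symm

lemma jac_N_y (N s m : ℕ) (y : ℤ) (hm : (m : ℤ) ∣ y) (hN : (N : ℤ) = s ^ 2 + 2 * y ^ 2)
    (h : IsCoprime (s : ℤ) y) :
    J(N | m) = 1 := by
  have h1 : J(N | m) = J((s : ℤ) ^ 2 | m) := by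
    apply jacobiSym.mod_left'
    rw [hN]
    apply Int.emod_emod_of_dvd _ (dvd_refl _) |>.symm.trans
    obtain ⟨k, rfl⟩ := hm
    have : ((s : ℤ) ^ 2 + 2 * (m * k) ^ 2) = s ^ 2 + m * (2 * m * k ^ 2) := by ring
    rw [this, Int.add_mul_emod_self_left, Int.emod_emod_of_dvd _ (dvd_refl _)]
  rw [h1, jacobiSym.sq_one']
  rw [← Int.isCoprime_iff_gcd_eq_one]; exact h.of_isCoprime_of_dvd_right hm

lemma jac_y_A (N s : ℕ) (y : ℤ) (hN : (N : ℤ) = s ^ 2 + 2 * y ^ 2) (h8 : N % 8 = 1)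
    (h : IsCoprime (s : ℤ) y) : J(y | N) = 1 := by
  have hNo : Odd N := Nat.odd_iff.mpr (by omega)
  rcases eq_or_ne y 0 with rfl | hy
  · have hs : IsUnit (s : ℤ) := isCoprime_zero_right.mp h
    have : (s : ℤ) ^ 2 = 1 := by rcases Int.isUnit_iff.mp hs with h | h <;> rw [h] <;> norm_num
    have : N = 1 := by
      rw [this] at hN; norm_num at hN; exact_mod_cast hN
    subst this; simp
  · have habs : J(y | N) = J((y.natAbs : ℤ) | N) := by
      rcases Int.natAbs_eq y with h' | h'
      · rw [← h']
      · conv_lhs => rw [h']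
        rw [jacobiSym.neg _ hNo, ← jacobiSym.at_neg_one hNo, jac_neg_one N (by omega)]
        simp [show N % 4 = 1 by omega]
    rw [habs]
    obtain ⟨k, m, hm, hk⟩ := Nat.exists_eq_two_pow_mul_odd (n := y.natAbs) (by simpa using hy)
    have h2 : J(2 | N) = 1 := by rw [jac_two N (by omega)]; simp [h8]
    rw [hk]
    push_cast
    rw [jacobiSym.mul_left, jacobiSym.pow_left, h2, one_pow, one_mul,
      jacobiSym.quadratic_reciprocity_one_mod_four' hm (by omega)]
    apply jac_N_y N s m y _ hN h
    rw [Int.natCast_dvd]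
    exact ⟨2 ^ k, by rw [hk, mul_comm]⟩

lemma jac_y_B (N s : ℕ) (y : ℤ) (hy : y % 2 = 1) (hN : (N : ℤ) = s ^ 2 + 2 * y ^ 2)
    (h8 : N % 4 = 3)
    (h : IsCoprime (s : ℤ) y) : J(y | N) = if y % 4 = 1 then 1 else -1 := by
  have hNo : Odd N := Nat.odd_iff.mpr (by omega)
  have hm : J((y.natAbs : ℤ) | N) = if y.natAbs % 4 = 1 then 1 else -1 := by
    rw [jac_recip _ _ (by omega) h8, jac_N_y N s y.natAbs y (by simp) hN h, mul_one]
  rcases Int.natAbs_eq y with h' | h'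
  · rw [← h'] at hm
    rw [hm]
    congr 1
    apply propext; omega
  · conv_lhs => rw [h']
    rw [jacobiSym.neg _ hNo, ← jacobiSym.at_neg_one hNo, jac_neg_one N (by omega), hm]
    rw [if_neg (show ¬ N % 4 = 1 by omega)]
    split_ifs <;> omega

lemma odd_sq_mod (w : ℕ) (hw : w % 2 = 1) :
    ((w : ℤ) ^ 2) % 16 = if w % 8 = 1 ∨ w % 8 = 7 then 1 else 9 := by
  have h1 : ((w : ℤ) ^ 2) % 16 = (((w % 8 : ℕ) : ℤ)) ^ 2 % 16 := by
    obtain ⟨k, hk⟩ : ∃ k, w = w % 8 + 8 * k := ⟨w / 8, by omega⟩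
    generalize w % 8 = r at *
    rw [hk]; push_cast
    have : ((r : ℤ) + 8 * k) ^ 2 = r ^ 2 + 16 * (r * k + 4 * k ^ 2) := by ring
    rw [this, Int.add_mul_emod_self_left]
  rw [h1]
  have h2 : w % 8 < 8 := Nat.mod_lt _ (by norm_num)
  have h3 : w % 8 % 2 = 1 := by omega
  generalize w % 8 = r at *
  interval_cases r <;> simp_all

lemma recip_key (u v w s : ℕ) (y : ℤ)
    (hw : (w : ℤ) ^ 2 = u * s ^ 2 + 4 * v * s * y + 2 * u * y ^ 2)
    (hv : v % 2 = 1) (hu : u % 8 = 1 ∨ u % 8 = 7) (hw2 : w % 2 = 1) (hs : s % 2 = 1)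
    (hsy : IsCoprime (s : ℤ) y) (hwv : Nat.Coprime w v) :
    J(2 | w) = (if u % 16 = 1 ∨ u % 16 = 15 then 1 else -1) * J(u | v) := by
  obtain ⟨N, hN⟩ : ∃ N : ℕ, (N : ℤ) = s ^ 2 + 2 * y ^ 2 :=
    ⟨((s : ℤ) ^ 2 + 2 * y ^ 2).toNat, Int.toNat_of_nonneg (by positivity)⟩
  have hs16 := odd_sq_mod s hs
  have hw16 := odd_sq_mod w hw2
  have hwN : (w : ℤ) ^ 2 = u * N + 4 * (v * s * y) := by rw [hN]; linear_combination hw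
  have hNodd : N % 2 = 1 := by
    have : (N : ℤ) % 2 = 1 := by
      rw [hN]
      have : ((s : ℤ) ^ 2) % 2 = 1 := by
        split_ifs at hs16 <;> omega
      omega
    omega
  have hcop : IsCoprime (w : ℤ) (N : ℤ) := by
    rw [Int.isCoprime_iff_gcd_eq_one]
    by_contra hne
    obtain ⟨q, hq, hqd⟩ := Nat.exists_prime_and_dvd hne
    have hqw : (q : ℤ) ∣ w := (Int.natCast_dvd_natCast.mpr hqd).trans (Int.gcd_dvd_left ..)
    have hqN : (q : ℤ) ∣ N := (Int.natCast_dvd_natCast.mpr hqd).trans (Int.gcd_dvd_right ..)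
    have hqp : Prime (q : ℤ) := Nat.prime_iff_prime_int.mp hq
    have hq2 : ¬ (q : ℤ) ∣ 2 := by
      intro h2
      have h2' : q ∣ 2 := by exact_mod_cast h2
      have : q = 2 := (Nat.prime_dvd_prime_iff_eq hq Nat.prime_two).mp h2'
      have : 2 ∣ N := by subst this; exact_mod_cast hqN
      omega
    have h4 : (q : ℤ) ∣ 4 * (v * s * y) := by
      have : (4 * (v * s * y) : ℤ) = w ^ 2 - u * N := by rw [hwN]; ring
      rw [this]
      exact dvd_sub (dvd_pow hqw (by norm_num)) (hqN.mul_left _)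
    have hboth : (q : ℤ) ∣ s ∧ (q : ℤ) ∣ y := by
      rcases hqp.dvd_or_dvd h4 with h | h
      · exact absurd (hqp.dvd_of_dvd_pow (show (q : ℤ) ∣ 2 ^ 2 by norm_num; exact h)) hq2
      · rcases hqp.dvd_or_dvd h with h | h
        · rcases hqp.dvd_or_dvd h with h | h
          · exfalso
            have h1 : q ∣ w := by exact_mod_cast hqw
            have h2 : q ∣ v := by exact_mod_cast h
            exact hq.one_lt.ne' (Nat.eq_one_of_dvd_coprimes hwv h1 h2)
          · refine ⟨h, ?_⟩
            have : (q : ℤ) ∣ 2 * y ^ 2 := by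
              have e : (2 * y ^ 2 : ℤ) = N - s ^ 2 := by rw [hN]; ring
              rw [e]; exact dvd_sub hqN (dvd_pow h (by norm_num))
            rcases hqp.dvd_or_dvd this with h | h
            · exact absurd h hq2
            · exact hqp.dvd_of_dvd_pow h
        · refine ⟨?_, h⟩
          have : (q : ℤ) ∣ s ^ 2 := by
            have e : (s ^ 2 : ℤ) = N - 2 * y ^ 2 := by rw [hN]; ring
            rw [e]; exact dvd_sub hqN ((dvd_pow h (by norm_num)).mul_left _)
          exact hqp.dvd_of_dvd_pow this
    exact hqp.not_isUnit (hsy.isUnit_of_dvd' hboth.1 hboth.2)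
  have e1 : J(u | v) * J(N | v) = 1 := by
    rw [← jacobiSym.mul_left]
    have : J((u : ℤ) * N | v) = J((w : ℤ) ^ 2 | v) := by
      apply jacobiSym.mod_left'
      have : (w : ℤ) ^ 2 = u * N + v * (4 * s * y) := by rw [hwN]; ring
      rw [this, Int.add_mul_emod_self_left]
    rw [this, jacobiSym.sq_one']
    simpa [Int.gcd] using hwv
  have e2 : J(v | N) * J(s | N) * J(y | N) = 1 := by
    have : J(4 * (v * s * y) | N) = J((w : ℤ) ^ 2 | N) := by
      apply jacobiSym.mod_left'
      have : (w : ℤ) ^ 2 = 4 * (v * s * y) + N * u := by rw [hwN]; ring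
      rw [this, Int.add_mul_emod_self_left]
    rw [jacobiSym.mul_left, jacobiSym.mul_left, jacobiSym.mul_left,
      jacobiSym.at_four (Nat.odd_iff.mpr hNodd), one_mul] at this
    rw [this, jacobiSym.sq_one']
    rwa [← Int.isCoprime_iff_gcd_eq_one]
  have e3 := jac_N_s N s y hN hsy
  have e4 := jac_two s hs
  have e5 := jac_two w hw2
  have hu16 : u % 16 = 1 ∨ u % 16 = 7 ∨ u % 16 = 9 ∨ u % 16 = 15 := by omega
  obtain ⟨a, ha⟩ : ∃ a : ℤ, (u : ℤ) = (u % 16 : ℕ) + 16 * a := ⟨(u / 16 : ℕ), by push_cast; omega⟩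
  obtain ⟨b, hb⟩ : ∃ b : ℤ, (s : ℤ) ^ 2 = ((s : ℤ) ^ 2 % 16) + 16 * b := ⟨(s : ℤ) ^ 2 / 16, by omega⟩
  rcases Int.emod_two_eq_zero_or_one y with hy | hy
  ·
    obtain ⟨z, rfl⟩ : ∃ z, y = 2 * z := ⟨y / 2, by omega⟩
    have hN8 : N % 8 = 1 := by
      have : (N : ℤ) % 8 = 1 := by
        rw [hN]
        have : (2 * (2 * z) ^ 2 : ℤ) = 8 * z ^ 2 := by ring
        rw [this]
        split_ifs at hs16 <;> omega
      omega
    have e6 := jac_y_A N s _ hN hN8 hsy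
    have e7 : J(s | N) = J(N | s) := jacobiSym.quadratic_reciprocity_one_mod_four'
      (Nat.odd_iff.mpr hs) (by omega)
    have e8 : J(v | N) = J(N | v) := jacobiSym.quadratic_reciprocity_one_mod_four'
      (Nat.odd_iff.mpr hv) (by omega)
    have hz : Even (z * (v * s + u * z)) := by
      have h1 : Odd (v : ℤ) := by rw [Int.odd_iff]; omega
      have h2 : Odd (s : ℤ) := by rw [Int.odd_iff]; omega
      have h3 : Odd (u : ℤ) := by rw [Int.odd_iff]; omega
      rcases Int.even_or_odd z with h | h
      · exact h.mul_right _
      · exact ((h1.mul h2).add_odd (h3.mul h)).mul_left _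
    obtain ⟨c, hc⟩ := hz
    have hmod : (w : ℤ) ^ 2 % 16 = ((u % 16 : ℕ) * ((s : ℤ) ^ 2 % 16)) % 16 := by
      have : (w : ℤ) ^ 2 = (u % 16 : ℕ) * ((s : ℤ) ^ 2 % 16)
          + 16 * ((u % 16 : ℕ) * b + a * s ^ 2 + c) := by
        linear_combination hw + 8 * hc + (s : ℤ) ^ 2 * ha + (u % 16 : ℕ) * hb
      rw [this, Int.add_mul_emod_self_left]
    rw [e8, e7, e3, e6] at e2
    have e9 : J(u | v) = J(2 | s) := by
      rcases jacobiSym.trichotomy N v with h | h | h <;> rw [h] at e1 e2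
      · simp at e1
      · linarith
      · linarith
    rw [e9, e4, e5]
    rw [hw16, hs16] at hmod
    rcases hu16 with h | h | h | h <;> by_cases hP : (w % 8 = 1 ∨ w % 8 = 7) <;>
      by_cases hQ : (s % 8 = 1 ∨ s % 8 = 7) <;>
      simp only [h, hP, hQ, if_true, if_false] at hmod ⊢ <;> (try norm_num at hmod) <;> (try norm_num)
  ·
    have hy8 : y ^ 2 % 8 = 1 := by
      have := Int.eight_dvd_sq_sub_one_of_odd (Int.odd_iff.mpr hy)
      omega
    obtain ⟨m, hm⟩ : ∃ m : ℤ, y ^ 2 = 1 + 8 * m := ⟨y ^ 2 / 8, by omega⟩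
    have hN4 : N % 4 = 3 := by
      have : (N : ℤ) % 4 = 3 := by
        rw [hN, hm]
        split_ifs at hs16 <;> omega
      omega
    have e6 := jac_y_B N s y hy hN hN4 hsy
    have e7 := jac_recip s N hs hN4
    have e8 := jac_recip v N hv hN4
    obtain ⟨v', hv'⟩ : ∃ k : ℤ, (v : ℤ) = (v % 4 : ℕ) + 4 * k := ⟨(v / 4 : ℕ), by push_cast; omega⟩
    obtain ⟨s', hs'⟩ : ∃ k : ℤ, (s : ℤ) = (s % 4 : ℕ) + 4 * k := ⟨(s / 4 : ℕ), by push_cast; omega⟩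
    obtain ⟨y', hy'⟩ : ∃ k : ℤ, y = (y % 4) + 4 * k := ⟨y / 4, by omega⟩
    have hmod : (w : ℤ) ^ 2 % 16 = ((u % 16 : ℕ) * ((s : ℤ) ^ 2 % 16) + 2 * (u % 16 : ℕ)
        + 4 * ((v % 4 : ℕ) * (s % 4 : ℕ) * (y % 4))) % 16 := by
      have : (w : ℤ) ^ 2 = ((u % 16 : ℕ) * ((s : ℤ) ^ 2 % 16) + 2 * (u % 16 : ℕ)
        + 4 * ((v % 4 : ℕ) * (s % 4 : ℕ) * (y % 4)))
          + 16 * ((u % 16 : ℕ) * b + a * s ^ 2 + u * m + 2 * a +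
            (v' * s * y + (v % 4 : ℕ) * s' * y + (v % 4 : ℕ) * (s % 4 : ℕ) * y')) := by
        linear_combination hw + 2 * u * hm + (s : ℤ) ^ 2 * ha + (u % 16 : ℕ) * hb + 2 * ha
          + 4 * s * y * hv' + 4 * (v % 4 : ℕ) * y * hs' + 4 * (v % 4 : ℕ) * (s % 4 : ℕ) * hy'
      rw [this, Int.add_mul_emod_self_left]
    rw [e8, e7, e3, e6, e4] at e2
    rw [e5]
    rw [hw16, hs16] at hmod
    have hv4 : v % 4 = 1 ∨ v % 4 = 3 := by omega
    have hs4 : s % 4 = 1 ∨ s % 4 = 3 := by omega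
    have hy4 : y % 4 = 1 ∨ y % 4 = 3 := by omega
    have e10 : J(u | v) = J(N | v) := by
      rcases jacobiSym.trichotomy N v with h | h | h <;> rw [h] at e1 ⊢
      · simp at e1
      · linarith
      · linarith
    rw [e10]
    clear e1 e3 e4 e5 e6 e7 e8 e10 hw16 hs16 hw hwN hcop hN hb ha hv' hs' hy'
    generalize J(N | v) = j at *
    rcases hu16 with h | h | h | h <;> by_cases hP : (w % 8 = 1 ∨ w % 8 = 7) <;>
      by_cases hQ : (s % 8 = 1 ∨ s % 8 = 7) <;>
      rcases hv4 with h1 | h1 <;> rcases hs4 with h2 | h2 <;> rcases hy4 with h3 | h3 <;>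
      simp only [h, h1, h2, h3, hP, hQ, if_true, if_false] at hmod e2 ⊢ <;>
      (try norm_num at hmod) <;> (try norm_num at e2) <;> (try norm_num) <;> linarith

end PartD

section PartE
open NumberTheorySymbols

lemma exists_rep (p : ℕ) (hp : p.Prime) (hmod : p % 8 = 7) :
    ∃ u v : ℕ, 0 < u ∧ 0 < v ∧ (p : ℤ) = u ^ 2 - 2 * v ^ 2 := by
  have : Fact p.Prime := ⟨hp⟩
  obtain ⟨r, hr⟩ : IsSquare (2 : ZMod p) :=
    (ZMod.exists_sq_eq_two_iff (by omega)).mpr (Or.inr hmod)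
  set k := Nat.sqrt p with hk
  have hk1 : p < (k + 1) * (k + 1) := Nat.lt_succ_sqrt p
  have hk2 : k * k ≤ p := Nat.sqrt_le p
  have hnsq : ∀ n : ℕ, n * n ≠ p := by
    intro n hn
    exact (Nat.Prime.prime hp).irreducible.not_isSquare ⟨n, hn.symm⟩
  have hk3 : k * k < p := lt_of_le_of_ne hk2 (hnsq k)
  let S := Finset.range (k + 1) ×ˢ Finset.range (k + 1)
  obtain ⟨⟨x1, y1⟩, h1, ⟨x2, y2⟩, h2, hne, heq⟩ := Finset.exists_ne_map_eq_of_card_lt_of_maps_to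
    (s := S) (t := (Finset.univ : Finset (ZMod p)))
    (f := fun z => (z.1 : ZMod p) - r * z.2)
    (by simp [S, ZMod.card]; exact hk1) (by intro _ _; simp)
  simp only [S, Finset.mem_product, Finset.mem_range] at h1 h2 heq
  obtain ⟨x, hx⟩ : ∃ x : ℤ, x = x1 - x2 := ⟨_, rfl⟩
  obtain ⟨y, hy⟩ : ∃ y : ℤ, y = y1 - y2 := ⟨_, rfl⟩
  have hxk : x ^ 2 ≤ (k : ℤ) ^ 2 := sq_le_sq' (by omega) (by omega)
  have hyk : y ^ 2 ≤ (k : ℤ) ^ 2 := sq_le_sq' (by omega) (by omega)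
  have hk3' : (k : ℤ) ^ 2 < p := by rw [sq]; exact_mod_cast hk3
  have hdvd : (p : ℤ) ∣ x ^ 2 - 2 * y ^ 2 := by
    rw [← ZMod.intCast_zmod_eq_zero_iff_dvd]
    have h : (x : ZMod p) = r * y := by
      rw [hx, hy]; push_cast; linear_combination heq
    push_cast
    rw [h, hr]; ring
  obtain ⟨c, hc⟩ := hdvd
  have hp0 : (0 : ℤ) < p := by exact_mod_cast hp.pos
  have hc1 : c < 1 := by nlinarith [sq_nonneg y]
  have hc2 : -2 < c := by nlinarith [sq_nonneg x]
  have hc0 : c ≠ 0 := by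
    rintro rfl
    have : Zsqrtd.Nonsquare 2 := ⟨fun n h => by
      have : n < 2 := by nlinarith
      interval_cases n <;> omega⟩
    have := Zsqrtd.divides_sq_eq_zero_z (d := 2) (x := x) (y := y)
      (by push_cast; linear_combination hc)
    apply hne
    have e1 : x1 = x2 := by omega
    have e2 : y1 = y2 := by omega
    rw [e1, e2]
  have hcm : c = -1 := by omega
  rw [hcm] at hc
  have key : (p : ℤ) = (x + 2 * y) ^ 2 - 2 * (x + y) ^ 2 := by linear_combination hc
  refine ⟨(x + 2 * y).natAbs, (x + y).natAbs, ?_, ?_, ?_⟩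
  · rw [Int.natAbs_pos]; intro h0
    rw [h0] at key; nlinarith [sq_nonneg (x + y)]
  · rw [Int.natAbs_pos]; intro h0
    rw [h0] at key
    apply hnsq (x + 2 * y).natAbs
    zify; rw [key, abs_mul_abs_self]; ring
  · rw [Int.natCast_natAbs, Int.natCast_natAbs, sq_abs, sq_abs]; exact key

lemma exists_q (p : ℕ) (hp : p.Prime) (hmod : p % 8 = 7) :
    ∃ q : ℕ, 0 < q ∧ q % 8 = 3 ∧ ∃ b : ℤ, (q : ℤ) ∣ b ^ 2 + 2 * p := by
  have hcop : Nat.Coprime 8 p := by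
    have : Nat.Coprime 2 p := (Nat.coprime_primes Nat.prime_two hp).mpr (by omega)
    simpa using this.pow_left 3
  obtain ⟨a, ha1, ha2⟩ := Nat.chineseRemainder hcop 3 (p - 1)
  have hac : Nat.Coprime a (8 * p) := by
    apply Nat.Coprime.mul_right
    · rw [Nat.Coprime, ha1.gcd_eq]; rfl
    · rw [Nat.Coprime, ha2.gcd_eq]
      have : Nat.Coprime (p - 1) (p - 1 + 1) := by simp
      rwa [Nat.sub_add_cancel hp.one_le] at this
  obtain ⟨q, -, hq, hqa⟩ := Nat.forall_exists_prime_gt_and_modEq 0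
    (show 8 * p ≠ 0 by have := hp.pos; omega) hac
  have hq8 : q % 8 = 3 := (hqa.of_mul_right p).trans ha1
  have hqp : q ≡ p - 1 [MOD p] := (hqa.of_mul_left 8).trans ha2
  have : Fact q.Prime := ⟨hq⟩
  refine ⟨q, hq.pos, hq8, ?_⟩
  have h1 : J(-2 | q) = 1 := by
    rw [jacobiSym.at_neg_two (Nat.odd_iff.mpr (by omega)), ZMod.χ₈'_nat_eq_if_mod_eight]
    simp [hq8]; omega
  have h2 : J(q | p) = -1 := by
    have : J(q | p) = J(-1 | p) := by
      apply jacobiSym.mod_left'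
      have : (q : ℤ) ≡ ((p - 1 : ℕ) : ℤ) [ZMOD p] := Int.natCast_modEq_iff.mpr hqp
      refine this.trans ?_
      rw [Nat.cast_sub hp.one_le]
      apply Int.ModEq.symm
      rw [Int.modEq_iff_dvd]; simp
    rw [this, jacobiSym.at_neg_one (Nat.odd_iff.mpr (by omega)), ZMod.χ₄_nat_eq_if_mod_four]
    simp [show p % 2 = 1 by omega, show p % 4 = 3 by omega]
  have h3 : J(p | q) = 1 := by
    rw [jacobiSym.quadratic_reciprocity_three_mod_four (by omega) (by omega), h2]; norm_num
  have h4 : J(-2 * p | q) = 1 := by rw [jacobiSym.mul_left, h1, h3]; norm_num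
  obtain ⟨z, hz⟩ := ZMod.isSquare_of_jacobiSym_eq_one h4
  obtain ⟨b, rfl⟩ := ZMod.intCast_surjective z
  refine ⟨b, ?_⟩
  rw [← ZMod.intCast_zmod_eq_zero_iff_dvd]
  push_cast at hz ⊢
  linear_combination -hz

end PartE

section PartC
open Ideal

variable {p : ℕ}

/-- conjugate ideal -/
noncomputable def cj (I : Ideal (ZR p)) : Ideal (ZR p) := I.map (starRingEnd (ZR p))

/-- `I` has norm `n`. -/
def HasN (I : Ideal (ZR p)) (n : ℤ) : Prop := 0 < n ∧ I * cj I = span {(n : ZR p)}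

/-- The ideal `(a, b + √(-2p))`. -/
def PI (p : ℕ) (a b : ℤ) : Ideal (ZR p) := span {(a : ZR p), (⟨b, 1⟩ : ZR p)}

lemma cj_mul (I J : Ideal (ZR p)) : cj (I * J) = cj I * cj J := Ideal.map_mul _ _ _

lemma cj_span (z : ZR p) : cj (span {z}) = span {star z} := by
  simp [cj, Ideal.map_span, starRingEnd_apply]

lemma cj_cj (I : Ideal (ZR p)) : cj (cj I) = I := by
  unfold cj
  rw [Ideal.map_map]
  have : (starRingEnd (ZR p)).comp (starRingEnd (ZR p)) = RingHom.id _ := by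
    ext <;> simp
  rw [this, Ideal.map_id]

lemma cj_PI (a b : ℤ) : cj (PI p a b) = span {(a : ZR p), (⟨b, -1⟩ : ZR p)} := by
  unfold cj PI
  rw [Ideal.map_span, Set.image_pair]
  simp [starRingEnd_apply, Zsqrtd.star_mk]

lemma HasN.mul {I J : Ideal (ZR p)} {n m : ℤ} (hI : HasN I n) (hJ : HasN J m) :
    HasN (I * J) (n * m) := by
  refine ⟨mul_pos hI.1 hJ.1, ?_⟩
  rw [cj_mul, mul_mul_mul_comm, hI.2, hJ.2, span_singleton_mul_span_singleton]
  push_cast; rfl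

lemma hasN_span (hp : 0 < p) {z : ZR p} (hz : z ≠ 0) : HasN (span {z}) z.norm := by
  have hd : -(2 * (p : ℤ)) < 0 := by omega
  refine ⟨lt_of_le_of_ne (Zsqrtd.norm_nonneg hd.le z) ?_, ?_⟩
  · intro h; exact hz ((Zsqrtd.norm_eq_zero_iff hd z).mp h.symm)
  · rw [cj_span, span_singleton_mul_span_singleton, Zsqrtd.norm_eq_mul_conj]

lemma HasN.unique {I : Ideal (ZR p)} {n m : ℤ} (hI : HasN I n) (hJ : HasN I m) : n = m := by
  have h := hI.2.symm.trans hJ.2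
  have h1 : (m : ZR p) ∣ n := by
    rw [← Ideal.mem_span_singleton, ← h]; exact Ideal.mem_span_singleton_self _
  have h2 : (n : ZR p) ∣ m := by
    rw [← Ideal.mem_span_singleton, h]; exact Ideal.mem_span_singleton_self _
  rw [Zsqrtd.intCast_dvd_intCast] at h1 h2
  exact Int.dvd_antisymm hI.1.le hJ.1.le h2 h1

lemma HasN.mem {I : Ideal (ZR p)} {n : ℤ} (hI : HasN I n) : (n : ZR p) ∈ I := by
  have : (n : ZR p) ∈ I * cj I := by rw [hI.2]; exact Ideal.mem_span_singleton_self _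
  exact (Ideal.mul_le_left : I * cj I ≤ I) this

lemma HasN.top {I : Ideal (ZR p)} (hI : HasN I 1) : I = ⊤ := by
  have := hI.mem
  rw [Ideal.eq_top_iff_one]; simpa using this

lemma mem_PI {a b : ℤ} (hab : a ∣ b ^ 2 + 2 * p) (x y : ℤ) :
    (⟨x, y⟩ : ZR p) ∈ PI p a b ↔ a ∣ x - b * y := by
  unfold PI
  rw [Ideal.mem_span_pair]
  constructor
  · rintro ⟨⟨s, t⟩, ⟨s', t'⟩, h⟩
    rw [Zsqrtd.ext_iff] at h
    simp at h
    obtain ⟨c, hc⟩ := hab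
    obtain ⟨h1, h2⟩ := h
    refine ⟨s - b * t - c * t', ?_⟩
    rw [← h1, ← h2]; linear_combination -t' * hc
  · rintro ⟨c, hc⟩
    refine ⟨⟨c, 0⟩, ⟨y, 0⟩, ?_⟩
    rw [Zsqrtd.ext_iff]
    simp; linear_combination -hc

lemma coprime_form (hp : p.Prime) (hp2 : p % 2 = 1) {a b c : ℤ} (h : b ^ 2 + 2 * p = a * c) :
    ∃ x y z : ℤ, x * a + y * (2 * b) + z * c = 1 := by
  have hpZ : Prime (p : ℤ) := Nat.prime_iff_prime_int.mp hp
  have hg : Int.gcd (Int.gcd a (2 * b)) c = 1 := by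
    by_contra hne
    obtain ⟨q, hq, hqd⟩ := Nat.exists_prime_and_dvd hne
    have hqZ : Prime (q : ℤ) := Nat.prime_iff_prime_int.mp hq
    have h0 : (q : ℤ) ∣ (Int.gcd a (2 * b) : ℤ) :=
      (Int.natCast_dvd_natCast.mpr hqd).trans (Int.gcd_dvd_left ..)
    have hqc : (q : ℤ) ∣ c := (Int.natCast_dvd_natCast.mpr hqd).trans (Int.gcd_dvd_right ..)
    have hqa : (q : ℤ) ∣ a := h0.trans (Int.gcd_dvd_left ..)
    have hqb : (q : ℤ) ∣ 2 * b := h0.trans (Int.gcd_dvd_right ..)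
    have hsq : (q : ℤ) * q ∣ b ^ 2 + 2 * p := by rw [h]; exact mul_dvd_mul hqa hqc
    have hqb' : (q : ℤ) ∣ b := by
      rcases hqZ.dvd_or_dvd hqb with h2 | h2
      · have h2' : q ∣ 2 := by exact_mod_cast h2
        have : q = 2 := (Nat.prime_dvd_prime_iff_eq hq Nat.prime_two).mp h2'
        subst this
        have : (2 : ℤ) ∣ b ^ 2 := by
          have h3 := (Dvd.intro _ rfl : (2 : ℤ) ∣ 2 * 2).trans (by exact_mod_cast hsq)
          omega
        exact_mod_cast Int.prime_two.dvd_of_dvd_pow this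
      · exact h2
    have h2p : (q : ℤ) * q ∣ 2 * p := by
      have : (q : ℤ) * q ∣ b ^ 2 := by rw [sq]; exact mul_dvd_mul hqb' hqb'
      exact (dvd_add_right this).mp hsq
    have h2p' : q * q ∣ 2 * p := by exact_mod_cast h2p
    have hsf : Squarefree (2 * p) := by
      rw [Nat.squarefree_mul ((Nat.coprime_primes Nat.prime_two hp).mpr (by omega))]
      exact ⟨Nat.prime_two.squarefree, hp.squarefree⟩
    have := hsf _ h2p'
    exact hq.not_isUnit this
  have e1 := Int.gcd_eq_gcd_ab a (2 * b)
  have e2 := Int.gcd_eq_gcd_ab (Int.gcd a (2 * b)) c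
  rw [hg] at e2
  refine ⟨Int.gcdA a (2 * b) * Int.gcdA (Int.gcd a (2 * b)) c,
    Int.gcdB a (2 * b) * Int.gcdA (Int.gcd a (2 * b)) c, Int.gcdB (Int.gcd a (2 * b)) c, ?_⟩
  push_cast at e2
  linear_combination -e2 - Int.gcdA (Int.gcd a (2 * b)) c * e1

lemma hasN_PI (hp : p.Prime) (hp2 : p % 2 = 1) {a b : ℤ} (ha : 0 < a) (hab : a ∣ b ^ 2 + 2 * p) :
    HasN (PI p a b) a := by
  refine ⟨ha, ?_⟩
  rw [cj_PI]
  obtain ⟨c, hc⟩ := hab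
  have e4 : (⟨b, 1⟩ : ZR p) * ⟨b, -1⟩ = a * c := by
    rw [Zsqrtd.ext_iff]; simp; linear_combination hc
  unfold PI
  apply le_antisymm
  · rw [Ideal.span_mul_span', Ideal.span_le]
    rintro _ ⟨x, hx, y, hy, rfl⟩
    simp only [Set.mem_insert_iff, Set.mem_singleton_iff] at hx hy
    rw [SetLike.mem_coe, Ideal.mem_span_singleton]
    change (a : ZR p) ∣ x * y
    rcases hx with rfl | rfl
    · exact dvd_mul_right _ _
    · rcases hy with rfl | rfl
      · exact dvd_mul_left _ _
      · rw [e4]; exact dvd_mul_right _ _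
  · rw [Ideal.span_singleton_le_iff_mem]
    obtain ⟨x, y, z, hxyz⟩ := coprime_form hp hp2 hc
    set I := span {(a : ZR p), (⟨b, 1⟩ : ZR p)}
    set J := span {(a : ZR p), (⟨b, -1⟩ : ZR p)}
    have m1 : (a : ZR p) ∈ I := Ideal.subset_span (by simp)
    have m2 : (⟨b, 1⟩ : ZR p) ∈ I := Ideal.subset_span (by simp)
    have m3 : (a : ZR p) ∈ J := Ideal.subset_span (by simp)
    have m4 : (⟨b, -1⟩ : ZR p) ∈ J := Ideal.subset_span (by simp)
    have e : (a : ZR p) = x * (a * a) + y * (a * ⟨b, -1⟩ + ⟨b, 1⟩ * a) + z * (⟨b, 1⟩ * ⟨b, -1⟩) := by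
      rw [e4, Zsqrtd.ext_iff]; simp; linear_combination -a * hxyz
    rw [e]
    exact add_mem (add_mem (Ideal.mul_mem_left _ _ (Ideal.mul_mem_mul m1 m3))
      (Ideal.mul_mem_left _ _ (add_mem (Ideal.mul_mem_mul m1 m4) (Ideal.mul_mem_mul m2 m3))))
      (Ideal.mul_mem_left _ _ (Ideal.mul_mem_mul m2 m4))

lemma ideal_form (hp : 0 < p) (I : Ideal (ZR p)) (hI : I ≠ ⊥) :
    ∃ m a b : ℤ, 0 < m ∧ 0 < a ∧ a ∣ b ^ 2 + 2 * p ∧ I = span {(m : ZR p)} * PI p a b := by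
  have hd : -(2 * (p : ℤ)) < 0 := by omega
  let K : Ideal ℤ :=
    { carrier := {y | ∃ x, (⟨x, y⟩ : ZR p) ∈ I}
      add_mem' := by
        rintro y y' ⟨x, hx⟩ ⟨x', hx'⟩
        exact ⟨x + x', by simpa using add_mem hx hx'⟩
      zero_mem' := ⟨0, I.zero_mem⟩
      smul_mem' := by
        rintro c y ⟨x, hx⟩
        refine ⟨c * x, ?_⟩
        have := I.mul_mem_left (c : ZR p) hx
        rwa [Zsqrtd.smul_val] at this }
  have hKmem : ∀ y, y ∈ K ↔ ∃ x, (⟨x, y⟩ : ZR p) ∈ I := fun y => Iff.rfl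
  let L : Ideal ℤ := I.comap (Int.castRingHom (ZR p))
  have hLmem : ∀ n : ℤ, n ∈ L ↔ (⟨n, 0⟩ : ZR p) ∈ I := by
    intro n
    rw [← Zsqrtd.intCast_val]; exact Iff.rfl
  have hgen : ∀ M : Ideal ℤ, ∃ m : ℤ, 0 ≤ m ∧ M = span {m} := by
    intro M
    obtain ⟨m, hm⟩ := IsPrincipalIdealRing.principal M
    refine ⟨|m|, abs_nonneg _, ?_⟩
    rw [show M = span {m} from hm, Ideal.span_singleton_eq_span_singleton]
    exact (Int.associated_natAbs m).trans (by rw [Int.natCast_natAbs])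
  obtain ⟨m, hm0, hm⟩ := hgen K
  obtain ⟨n, hn0, hn⟩ := hgen L
  have hKd : ∀ x y, (⟨x, y⟩ : ZR p) ∈ I → m ∣ y := by
    intro x y h
    have : y ∈ K := ⟨x, h⟩
    rwa [hm, Ideal.mem_span_singleton] at this
  have hLd : ∀ x, (⟨x, 0⟩ : ZR p) ∈ I → n ∣ x := by
    intro x h
    have : x ∈ L := (hLmem x).mpr h
    rwa [hn, Ideal.mem_span_singleton] at this
  obtain ⟨x0, hz0⟩ : m ∈ K := by rw [hm]; exact Ideal.mem_span_singleton_self _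
  have hnI : (⟨n, 0⟩ : ZR p) ∈ I := by
    rw [← hLmem, hn]; exact Ideal.mem_span_singleton_self _
  have hθ : ∀ x y, (⟨x, y⟩ : ZR p) ∈ I → (⟨-(2 * p) * y, x⟩ : ZR p) ∈ I := by
    intro x y h
    have := I.mul_mem_left Zsqrtd.sqrtd h
    rwa [Zsqrtd.muld_val] at this
  obtain ⟨b, hb⟩ : m ∣ x0 := hKd _ _ (hθ _ _ hz0)
  obtain ⟨a, ha⟩ : m ∣ n := hKd _ _ (hθ _ _ hnI)
  have hnpos : 0 < n := by
    refine lt_of_le_of_ne hn0 ?_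
    intro h
    obtain ⟨z, hz, hz0⟩ := Submodule.exists_mem_ne_zero_of_ne_bot hI
    have h1 : (⟨z.norm, 0⟩ : ZR p) ∈ I := by
      rw [← Zsqrtd.intCast_val, Zsqrtd.norm_eq_mul_conj]
      exact I.mul_mem_right _ hz
    have h2 := hLd _ h1
    rw [← h, zero_dvd_iff, Zsqrtd.norm_eq_zero_iff hd] at h2
    exact hz0 h2
  have hmpos : 0 < m := by
    refine lt_of_le_of_ne hm0 ?_
    rintro rfl
    simp at ha; omega
  have hapos : 0 < a := by
    rw [ha] at hnpos; exact pos_of_mul_pos_right hnpos hm0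
  subst hb ha
  refine ⟨m, a, b, hmpos, hapos, ?_, ?_⟩
  · have h1 : (⟨m * (b ^ 2 + 2 * p), 0⟩ : ZR p) ∈ I := by
      have := I.mul_mem_left (⟨b, -1⟩ : ZR p) hz0
      convert this using 1
      rw [Zsqrtd.ext_iff]; constructor <;> simp <;> ring
    have := hLd _ h1
    exact (mul_dvd_mul_iff_left hmpos.ne').mp this
  · apply le_antisymm
    · rintro ⟨x, y⟩ hxy
      obtain ⟨k, hk⟩ := hKd _ _ hxy
      have h1 : (⟨x - k * (m * b), 0⟩ : ZR p) ∈ I := by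
        have := I.sub_mem hxy (I.mul_mem_left (k : ZR p) hz0)
        convert this using 1
        rw [Zsqrtd.ext_iff, hk]; constructor <;> simp <;> ring
      obtain ⟨l, hl⟩ := hLd _ h1
      rw [Ideal.mem_span_singleton_mul]
      refine ⟨(l : ZR p) * a + (k : ZR p) * ⟨b, 1⟩, ?_, ?_⟩
      · exact Ideal.mem_span_pair.mpr ⟨_, _, rfl⟩
      · rw [Zsqrtd.ext_iff, hk]; constructor
        · simp; linear_combination -hl
        · simp
    · unfold PI
      rw [Ideal.span_mul_span', Ideal.span_le]
      rintro _ ⟨x, hx, y, hy, rfl⟩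
      simp only [Set.mem_insert_iff, Set.mem_singleton_iff] at hx hy
      rcases hx with rfl
      rw [SetLike.mem_coe]
      rcases hy with rfl | rfl
      · convert hnI using 1
        rw [Zsqrtd.ext_iff]; simp
      · convert hz0 using 1
        rw [Zsqrtd.ext_iff]; simp

lemma exists_hasN (hp : p.Prime) (hp2 : p % 2 = 1) (I : Ideal (ZR p)) (hI : I ≠ ⊥) :
    ∃ n, HasN I n := by
  obtain ⟨m, a, b, hm, ha, hab, rfl⟩ := ideal_form hp.pos I hI
  exact ⟨_, (hasN_span hp.pos (by simpa using hm.ne')).mul (hasN_PI hp hp2 ha hab)⟩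

end PartC

section PartG
open Ideal nonZeroDivisors

variable {p : ℕ}

set_option linter.unusedSectionVars false

section cls
variable [IsDedekindDomain (ZR p)]

/-- `I` is a nonzero ideal in the class `g`. -/
def ClRep (g : ClassGroup (ZR p)) (I : Ideal (ZR p)) : Prop :=
  ∃ h : I ∈ (Ideal (ZR p))⁰, ClassGroup.mk0 ⟨I, h⟩ = g

lemma ClRep.ne {g : ClassGroup (ZR p)} {I : Ideal (ZR p)} (h : ClRep g I) : I ≠ ⊥ :=
  mem_nonZeroDivisors_iff_ne_zero.mp h.1

lemma ClRep.mul {g k : ClassGroup (ZR p)} {I J : Ideal (ZR p)} (h : ClRep g I) (h' : ClRep k J) :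
    ClRep (g * k) (I * J) := by
  obtain ⟨h, rfl⟩ := h
  obtain ⟨h', rfl⟩ := h'
  exact ⟨mul_mem h h', by rw [← map_mul]; rfl⟩

lemma ClRep.unique {g k : ClassGroup (ZR p)} {I : Ideal (ZR p)} (h : ClRep g I) (h' : ClRep k I) :
    g = k := by
  obtain ⟨h, rfl⟩ := h
  obtain ⟨h', rfl⟩ := h'
  rfl

lemma rep_exists {I : Ideal (ZR p)} (h : I ≠ ⊥) : ∃ g : ClassGroup (ZR p), ClRep g I :=
  ⟨_, mem_nonZeroDivisors_iff_ne_zero.mpr h, rfl⟩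

lemma exists_rep_ideal (g : ClassGroup (ZR p)) : ∃ I, ClRep g I := by
  obtain ⟨⟨I, h⟩, rfl⟩ := ClassGroup.mk0_surjective g
  exact ⟨I, h, rfl⟩

lemma rep_one_span {z : ZR p} (hz : z ≠ 0) : ClRep 1 (span {z}) := by
  refine ⟨mem_nonZeroDivisors_iff_ne_zero.mpr ?_, ?_⟩
  · simpa [Ideal.zero_eq_bot, Ideal.span_singleton_eq_bot] using hz
  · rw [ClassGroup.mk0_eq_one_iff]; exact ⟨⟨z, rfl⟩⟩

lemma ClRep.principal {I : Ideal (ZR p)} (h : ClRep 1 I) : ∃ z : ZR p, z ≠ 0 ∧ I = span {z} := by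
  have hne := h.ne
  obtain ⟨h, h1⟩ := h
  rw [ClassGroup.mk0_eq_one_iff] at h1
  obtain ⟨z, hz⟩ := h1
  refine ⟨z, ?_, hz⟩
  rintro rfl
  apply hne
  rw [hz]; simp

lemma ClRep.of_span_mul {g : ClassGroup (ZR p)} {I : Ideal (ZR p)} {z : ZR p}
    (h : ClRep g (span {z} * I)) : ClRep g I := by
  have hz : z ≠ 0 := by
    rintro rfl
    exact h.ne (by simp)
  have hI : I ≠ ⊥ := by
    rintro rfl
    exact h.ne (by simp)
  obtain ⟨k, hk⟩ := rep_exists hI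
  have := (rep_one_span hz).mul hk
  rw [one_mul] at this
  rwa [h.unique this]

lemma HasN.ne {I : Ideal (ZR p)} {n : ℤ} (h : HasN I n) : I ≠ ⊥ := by
  rintro rfl
  have h2 := h.2
  rw [Ideal.bot_mul, eq_comm, Ideal.span_singleton_eq_bot] at h2
  have := h.1
  norm_cast at h2
  omega

lemma eq_of_le_norm (hp : p.Prime) (hp2 : p % 2 = 1) {I J : Ideal (ZR p)} {n : ℤ}
    (hI : HasN I n) (hJ : HasN J n) (hle : I ≤ J) : I = J := by
  obtain ⟨K, rfl⟩ := Ideal.dvd_iff_le.mpr hle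
  have hK : K ≠ ⊥ := by
    rintro rfl
    exact hI.ne (by simp)
  obtain ⟨k, hk⟩ := exists_hasN hp hp2 K hK
  have := (hJ.mul hk).unique hI
  have hk1 : k = 1 := by
    have h3 := hJ.1
    nlinarith [mul_left_cancel₀ h3.ne' (this.trans (mul_one n).symm)]
  subst hk1
  rw [hk.top, Ideal.mul_top]

lemma exists_coprime_rep (hp : p.Prime) (g : ClassGroup (ZR p)) (M : ℤ) (hM : M ≠ 0) :
    ∃ a b : ℤ, 0 < a ∧ a ∣ b ^ 2 + 2 * p ∧ IsCoprime a M ∧ ClRep g (PI p a b) := by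
  obtain ⟨J, hJ⟩ := exists_rep_ideal g⁻¹
  have hMz : (M : ZR p) ≠ 0 := by exact_mod_cast hM
  have hne : J * span {(M : ZR p)} ≠ ⊥ := by
    rw [Ne, Ideal.mul_eq_bot]
    push Not
    exact ⟨hJ.ne, by simpa using hM⟩
  obtain ⟨z, hz0, hz⟩ : ∃ z : ZR p, z ≠ 0 ∧ J * span {(M : ZR p)} ⊔ span {z} = J := by
    obtain ⟨z, hz⟩ := IsDedekindDomain.exists_sup_span_eq
      (Ideal.mul_le_left : J * span {(M : ZR p)} ≤ J) hne
    by_cases h0 : z = 0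
    · subst h0
      obtain ⟨w, hw, hw0⟩ := Submodule.exists_mem_ne_zero_of_ne_bot hne
      refine ⟨w, hw0, ?_⟩
      rw [sup_eq_left.mpr ((Ideal.span_singleton_le_iff_mem _).mpr hw)]
      simpa using hz
    · exact ⟨z, h0, hz⟩
  have hzJ : span {z} ≤ J := by
    conv_rhs => rw [← hz]
    exact le_sup_right
  obtain ⟨K, hK⟩ := Ideal.dvd_iff_le.mpr hzJ
  have htop : span {(M : ZR p)} ⊔ K = ⊤ := by
    have : J * (span {(M : ZR p)} ⊔ K) = J * ⊤ := by
      rw [Ideal.mul_sup, ← hK, hz, Ideal.mul_top]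
    exact mul_left_cancel₀ hJ.ne this
  have hKne : K ≠ ⊥ := by
    rintro rfl
    rw [Ideal.mul_bot, Ideal.span_singleton_eq_bot] at hK
    exact hz0 hK
  obtain ⟨k, hk⟩ := rep_exists hKne
  have hkg : k = g := by
    have h1 := hJ.mul hk
    rw [← hK] at h1
    have := h1.unique (rep_one_span hz0)
    rwa [inv_mul_eq_one, eq_comm] at this
  subst hkg
  obtain ⟨m, a, b, hm, ha, hab, hKe⟩ := ideal_form hp.pos K hKne
  refine ⟨a, b, ha, hab, ?_, ClRep.of_span_mul (hKe ▸ hk)⟩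
  have hle : K ≤ PI p a b := by rw [hKe]; exact Ideal.mul_le_right
  have h1 : (1 : ZR p) ∈ span {(M : ZR p)} ⊔ PI p a b := by
    have : (1 : ZR p) ∈ span {(M : ZR p)} ⊔ K := by rw [htop]; trivial
    exact (sup_le_sup_left hle _) this
  rw [Submodule.mem_sup] at h1
  obtain ⟨y, hy, ⟨x1, x2⟩, hx, hxy⟩ := h1
  rw [Ideal.mem_span_singleton] at hy
  obtain ⟨⟨z1, z2⟩, rfl⟩ := hy
  rw [mem_PI hab] at hx
  rw [Zsqrtd.ext_iff] at hxy
  simp at hxy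
  obtain ⟨e1, e2⟩ := hxy
  obtain ⟨c, hc⟩ := hx
  obtain ⟨d, hd⟩ := hab
  have hx1 : x1 = b * x2 + a * c := by linear_combination hc
  have hN : x1 ^ 2 + 2 * p * x2 ^ 2 = a * (d * x2 ^ 2 + 2 * b * x2 * c + a * c ^ 2) := by
    rw [hx1]; linear_combination x2 ^ 2 * hd
  have h1 : x1 = 1 - M * z1 := by linear_combination e1
  have h2 : x2 = - M * z2 := by linear_combination e2
  refine ⟨d * x2 ^ 2 + 2 * b * x2 * c + a * c ^ 2, 2 * z1 - M * z1 ^ 2 - 2 * p * M * z2 ^ 2, ?_⟩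
  rw [mul_comm _ a, ← hN, h1, h2]; ring

lemma cj_PI_zero (a : ℤ) : cj (PI p a 0) = PI p a 0 := by
  rw [cj_PI, PI]
  have : (⟨0, -1⟩ : ZR p) = - ⟨0, 1⟩ := by rw [Zsqrtd.ext_iff]; simp
  rw [this]
  apply le_antisymm <;> rw [Ideal.span_le] <;> rintro x (rfl | rfl) <;>
    simp only [SetLike.mem_coe]
  · exact Ideal.subset_span (by simp)
  · exact neg_mem (Ideal.subset_span (by simp))
  · exact Ideal.subset_span (by simp)
  · rw [← neg_mem_iff]; exact (Ideal.subset_span (by simp))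

lemma P2_sq (hp : p.Prime) (hp2 : p % 2 = 1) : PI p 2 0 * PI p 2 0 = span {(2 : ZR p)} := by
  have := (hasN_PI (p := p) (a := 2) (b := 0) hp hp2 (by norm_num) (by simp)).2
  rw [cj_PI_zero] at this
  simpa using this

lemma Pp_P2 (hp2 : p % 2 = 1) : PI p p 0 * PI p 2 0 = span {(⟨0, 1⟩ : ZR p)} := by
  unfold PI
  apply le_antisymm
  · rw [Ideal.span_mul_span', Ideal.span_le]
    rintro _ ⟨x, hx, y, hy, rfl⟩
    simp only [Set.mem_insert_iff, Set.mem_singleton_iff] at hx hy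
    rw [SetLike.mem_coe, Ideal.mem_span_singleton]
    change _ ∣ x * y
    rcases hx with rfl | rfl
    · rcases hy with rfl | rfl
      · refine ⟨⟨0, -1⟩, ?_⟩
        rw [Zsqrtd.ext_iff]; simp; ring
      · exact dvd_mul_left _ _
    · exact dvd_mul_right _ _
  · rw [Ideal.span_singleton_le_iff_mem]
    obtain ⟨k, hk⟩ : ∃ k : ℤ, (p : ℤ) = 2 * k + 1 := ⟨(p / 2 : ℕ), by omega⟩
    have e : (⟨0, 1⟩ : ZR p) = ((p : ℤ) : ZR p) * ⟨0, 1⟩ - (k : ZR p) * (⟨0, 1⟩ * ((2 : ℤ) : ZR p)) := by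
      rw [Zsqrtd.ext_iff]; simp; linear_combination -hk
    have : ∀ I : Ideal (ZR p), ((p : ℤ) : ZR p) * ⟨0, 1⟩ ∈ I → ⟨0, 1⟩ * ((2 : ℤ) : ZR p) ∈ I →
        (⟨0, 1⟩ : ZR p) ∈ I := by
      intro I h1 h2
      rw [e]
      exact sub_mem h1 (I.mul_mem_left _ h2)
    apply this
    · exact Ideal.mul_mem_mul (Ideal.subset_span (by simp)) (Ideal.subset_span (by simp))
    · exact Ideal.mul_mem_mul (Ideal.subset_span (by simp)) (Ideal.subset_span (by simp))

lemma P2p : PI p (2 * p) 0 = span {(⟨0, 1⟩ : ZR p)} := by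
  unfold PI
  apply le_antisymm
  · rw [Ideal.span_le]
    rintro x (rfl | rfl)
    · rw [SetLike.mem_coe, Ideal.mem_span_singleton]
      refine ⟨⟨0, -1⟩, ?_⟩
      rw [Zsqrtd.ext_iff]; simp
    · exact Ideal.mem_span_singleton_self _
  · rw [Ideal.span_singleton_le_iff_mem]
    exact Ideal.subset_span (by simp)

lemma self_conj_rep (hp : p.Prime) (hp2 : p % 2 = 1) (g : ClassGroup (ZR p)) (hg : g ^ 2 = 1) :
    ∃ A, ClRep g A ∧ cj A = A := by
  obtain ⟨a, b, ha, hab, -, hI⟩ := exists_coprime_rep hp g 1 one_ne_zero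
  have hN := hasN_PI hp hp2 ha hab
  set I := PI p a b
  have h1 := hI.mul hI
  rw [← sq, hg] at h1
  obtain ⟨γ, hγ0, hγ⟩ := h1.principal
  have hnorm : γ.norm = a * a := by
    have := hN.mul hN
    rw [hγ] at this
    exact (hasN_span hp.pos hγ0).unique this
  have ha0 : (a : ZR p) ≠ 0 := by exact_mod_cast ha.ne'
  have hsa : span {(a : ZR p)} ≠ 0 := by simpa using ha.ne'
  by_cases hβ : (a : ZR p) + γ = 0
  · refine ⟨I, hI, ?_⟩
    have : γ = - a := by linear_combination hβ
    rw [this, Ideal.span_singleton_neg, ← hN.2] at hγ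
    exact (mul_left_cancel₀ hI.ne hγ).symm
  · set β := (a : ZR p) + γ with hβd
    have hsβ : star β ≠ 0 := by simpa using hβ
    refine ⟨span {star β} * I, ?_, ?_⟩
    · simpa using (rep_one_span hsβ).mul hI
    · rw [cj_mul, cj_span, star_star]
      apply mul_left_cancel₀ hsa
      have e : star β * γ = a * β := by
        have hn : (γ.norm : ZR p) = γ * star γ := Zsqrtd.norm_eq_mul_conj γ
        rw [hnorm] at hn
        push_cast at hn
        rw [hβd, star_add]
        have : star (a : ZR p) = a := by simp [Zsqrtd.ext_iff]
        rw [this]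
        linear_combination -hn
      calc span {(a : ZR p)} * (span {β} * cj I) = span {star β * γ} * cj I := by
            rw [e, ← mul_assoc, Ideal.span_singleton_mul_span_singleton]
        _ = span {star β} * (I * I) * cj I := by
            rw [hγ, Ideal.span_singleton_mul_span_singleton]
        _ = span {(a : ZR p)} * (span {star β} * I) := by rw [← hN.2]; ring

lemma involutions (hp : p.Prime) (hp2 : p % 2 = 1) (c : ClassGroup (ZR p)) (hc : ClRep c (PI p 2 0))
    (g : ClassGroup (ZR p)) (hg : g ^ 2 = 1) : g = 1 ∨ g = c := by
  obtain ⟨A, hA, hAA⟩ := self_conj_rep hp hp2 g hg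
  obtain ⟨m, a, b, hm, ha, hab, rfl⟩ := ideal_form hp.pos A hA.ne
  have hm0 : span {(m : ZR p)} ≠ 0 := by simpa using hm.ne'
  have hg' := hA.of_span_mul
  have hcc : c * c = 1 := by
    have := hc.mul hc
    rw [P2_sq hp hp2] at this
    exact this.unique (rep_one_span (by norm_num))
  have hconj : cj (PI p a b) = PI p a b := by
    rw [cj_mul, cj_span] at hAA
    have : star (m : ZR p) = m := by simp [Zsqrtd.ext_iff]
    rw [this] at hAA
    exact mul_left_cancel₀ hm0 hAA
  have h2b : a ∣ 2 * b := by
    have : (⟨b, -1⟩ : ZR p) ∈ PI p a b := by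
      rw [← hconj, cj_PI]; exact Ideal.subset_span (by simp)
    rw [mem_PI hab] at this
    convert this using 1; ring
  have hb : a ∣ b := by
    rcases Int.even_or_odd' a with ⟨d, rfl | hd⟩
    · have hd : d ∣ b := (mul_dvd_mul_iff_left two_ne_zero).mp h2b
      have hbe : (2 : ℤ) ∣ b := by
        have h : (2 : ℤ) ∣ b ^ 2 + 2 * p := (dvd_mul_right _ _).trans hab
        exact Int.prime_two.dvd_of_dvd_pow (by omega : (2 : ℤ) ∣ b ^ 2)
      rcases Int.even_or_odd' d with ⟨e, rfl | he⟩
      · exfalso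
        obtain ⟨f, rfl⟩ := hbe
        obtain ⟨k, hk⟩ := hab
        have : (2 : ℤ) * p = 4 * (e * k - f ^ 2) := by linear_combination hk
        omega
      · refine IsCoprime.mul_dvd ?_ hbe hd
        exact ⟨-e, 1, by rw [he]; ring⟩
    · refine IsCoprime.dvd_of_dvd_mul_left ?_ h2b
      exact ⟨1, -d, by rw [hd]; ring⟩
  have h2p : a ∣ 2 * p := by
    have : a ∣ b ^ 2 := hb.trans (dvd_pow_self _ two_ne_zero)
    exact (dvd_add_right this).mp hab
  have h0 : PI p a b = PI p a 0 := by
    ext ⟨x, y⟩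
    rw [mem_PI hab, mem_PI (by simpa using h2p)]
    have : a ∣ b * y := hb.mul_right _
    constructor
    · intro h; have := dvd_add h this; simpa using this
    · intro h; simp at h; exact dvd_sub h this
  rw [h0] at hg'
  have hpZ : Prime (p : ℤ) := Nat.prime_iff_prime_int.mp hp
  have key : a = 1 ∨ a = 2 ∨ a = p ∨ a = 2 * p := by
    obtain ⟨n, rfl⟩ := Int.eq_ofNat_of_zero_le ha.le
    have h2p' : n ∣ 2 * p := by exact_mod_cast h2p
    have : n ∈ (2 * p).divisors := Nat.mem_divisors.mpr ⟨h2p', by have := hp.pos; omega⟩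
    obtain ⟨x, y, hx, hy, rfl⟩ := (Nat.dvd_mul).mp h2p'
    rcases (Nat.dvd_prime Nat.prime_two).mp hx with rfl | rfl <;>
      rcases (Nat.dvd_prime hp).mp hy with rfl | rfl <;> simp
  rcases key with rfl | rfl | rfl | rfl
  · left
    have : PI p 1 0 = span {(1 : ZR p)} := by
      rw [Ideal.span_singleton_one, Ideal.eq_top_iff_one, PI]
      exact Ideal.subset_span (by simp)
    rw [this] at hg'
    exact hg'.unique (rep_one_span one_ne_zero)
  · right; exact hg'.unique hc
  · right
    have h := hg'.mul hc
    rw [Pp_P2 hp2] at h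
    have h := h.unique (rep_one_span (by simp [Zsqrtd.ext_iff]))
    exact mul_right_cancel (h.trans hcc.symm)
  · left
    rw [P2p] at hg'
    exact hg'.unique (rep_one_span (by simp [Zsqrtd.ext_iff]))

lemma c_ne_one (hp : p.Prime) (hm : p % 8 = 7) (c : ClassGroup (ZR p)) (hc : ClRep c (PI p 2 0)) :
    c ≠ 1 := by
  rintro rfl
  obtain ⟨⟨x, y⟩, hz, h⟩ := hc.principal
  have h1 := hasN_PI (p := p) (a := 2) (b := 0) hp (by omega) (by norm_num) (by simp)
  rw [h] at h1
  have h2 := (hasN_span hp.pos hz).unique h1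
  rw [Zsqrtd.norm_def] at h2
  simp only at h2
  have hpp : (7 : ℤ) ≤ p := by omega
  by_cases hy : y = 0
  · subst hy
    have : x * x = 2 := by linarith
    have h3 : x < 2 := by nlinarith
    have h4 : -2 < x := by nlinarith
    interval_cases x <;> omega
  · have : 1 ≤ y * y := by have := mul_self_pos.mpr hy; omega
    nlinarith [mul_self_nonneg x]

lemma norm_mod (hm : p % 8 = 7) {x y n : ℤ} (hn : n % 2 = 1)
    (h : n = x * x + 2 * p * (y * y)) : n % 8 = 1 ∨ n % 8 = 7 := by
  obtain ⟨k, hk⟩ : ∃ k : ℤ, (p : ℤ) = 8 * k + 7 := ⟨(p / 8 : ℕ), by omega⟩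
  rw [hk] at h
  have hx : x % 2 = 1 := by
    rcases Int.emod_two_eq_zero_or_one x with h0 | h0
    · exfalso
      obtain ⟨d, rfl⟩ : (2 : ℤ) ∣ x := Int.dvd_of_emod_eq_zero h0
      have : n = 2 * (2 * d * d + (8 * k + 7) * (y * y)) := by rw [h]; ring
      omega
    · exact h0
  obtain ⟨d, hd⟩ : ∃ d, x = 2 * d + 1 := ⟨x / 2, by omega⟩
  have hdd : (d * (d + 1)) % 2 = 0 := Int.emod_eq_zero_of_dvd (Int.even_mul_succ_self d).two_dvd
  obtain ⟨e, he⟩ := Int.dvd_of_emod_eq_zero hdd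
  rcases Int.even_or_odd' y with ⟨f, hf | hf⟩
  · have : n = 8 * (e + (8 * k + 7) * f * f) + 1 := by
      rw [h, hd, hf]; linear_combination 4 * he
    omega
  · have : n = 8 * (e + 2 * k * y * y + 7 * (f * f + f) + 1) + 7 := by
      rw [h, hd]; rw [hf]; linear_combination 4 * he
    omega

lemma genus_one (hp : p.Prime) (hm : p % 8 = 7) {I : Ideal (ZR p)} {n : ℤ} (hI : ClRep 1 I)
    (hn : HasN I n) (h2 : n % 2 = 1) : n % 8 = 1 ∨ n % 8 = 7 := by
  obtain ⟨⟨x, y⟩, hz, rfl⟩ := hI.principal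
  have h := hn.unique (hasN_span hp.pos hz)
  rw [Zsqrtd.norm_def] at h
  simp only at h
  exact norm_mod hm h2 (x := x) (y := y) (by linarith)

lemma odd_sq8 {w : ℤ} (hw : w % 2 = 1) : (w * w) % 8 = 1 := by
  have := Int.sq_mod_four_eq_one_of_odd (Int.odd_iff.mpr hw)
  have h := Int.emod_emod_of_dvd w (by norm_num : (2 : ℤ) ∣ 8)
  rw [Int.mul_emod]
  have h1 : w % 8 = 1 ∨ w % 8 = 3 ∨ w % 8 = 5 ∨ w % 8 = 7 := by omega
  rcases h1 with h1 | h1 | h1 | h1 <;> rw [h1] <;> norm_num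

lemma genus_sq (hp : p.Prime) (hm : p % 8 = 7) {g : ClassGroup (ZR p)} {I : Ideal (ZR p)} {n : ℤ}
    (hI : ClRep g I) (hn : HasN I n) (h2 : n % 2 = 1) (hs : IsSquare g) :
    n % 8 = 1 ∨ n % 8 = 7 := by
  obtain ⟨k, rfl⟩ := hs
  obtain ⟨w, b, hw, hwb, hw2, hK⟩ := exists_coprime_rep hp k⁻¹ 2 two_ne_zero
  have hwN := hasN_PI hp (by omega) hw hwb
  have hwo : w % 2 = 1 := by
    obtain ⟨x, y, h⟩ := hw2
    rcases Int.emod_two_eq_zero_or_one w with h0 | h0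
    · obtain ⟨d, rfl⟩ : (2 : ℤ) ∣ w := Int.dvd_of_emod_eq_zero h0
      have : 2 * (x * d + y) = 1 := by linarith
      omega
    · exact h0
  have h1 := hI.mul (hK.mul hK)
  have e : k * k * (k⁻¹ * k⁻¹) = 1 := by group
  rw [e] at h1
  have hsq := odd_sq8 hwo
  have hmod : (n * (w * w)) % 8 = n % 8 := by
    rw [Int.mul_emod, hsq]; simp
  have := genus_one hp hm h1 (hn.mul (hwN.mul hwN)) (by omega)
  rwa [hmod] at this

lemma genus_iff [Finite (ClassGroup (ZR p))] (hp : p.Prime) (hm : p % 8 = 7)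
    {g : ClassGroup (ZR p)} {I : Ideal (ZR p)} {n : ℤ}
    (hI : ClRep g I) (hn : HasN I n) (h2 : n % 2 = 1) :
    IsSquare g ↔ (n % 8 = 1 ∨ n % 8 = 7) := by
  refine ⟨genus_sq hp hm hI hn h2, fun h => ?_⟩
  obtain ⟨q, hq, hq8, b, hqb⟩ := exists_q p hp hm
  have hqN : HasN (PI p q b) q := hasN_PI hp (by omega) (by exact_mod_cast hq) hqb
  obtain ⟨k, hk⟩ := rep_exists hqN.ne
  have hks : ¬ IsSquare k := by
    intro hs
    have := genus_sq hp hm hk hqN (by omega) hs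
    omega
  have h20 : HasN (PI p 2 0) 2 := hasN_PI hp (by omega) (by norm_num) (by simp)
  obtain ⟨c, hc⟩ := rep_exists h20.ne
  rcases grp_index_two c (involutions hp (by omega) c hc) k g hks with h' | h'
  · exact h'
  · exfalso
    have hmod : ((q : ℤ) * n) % 8 = 3 ∨ ((q : ℤ) * n) % 8 = 5 := by
      have : (q : ℤ) % 8 = 3 := by omega
      rw [Int.mul_emod, this]
      rcases h with h | h <;> rw [h] <;> norm_num
    have := genus_sq hp hm (hk.mul hI) (hqN.mul hn) (by omega) h'
    omega

end cls

end PartG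

section PartH
open Ideal nonZeroDivisors NumberTheorySymbols

variable {p : ℕ}

lemma uv_odd (hm : p % 8 = 7) {u v : ℕ} (h : (p : ℤ) = u ^ 2 - 2 * v ^ 2) :
    u % 2 = 1 ∧ v % 2 = 1 := by
  have h' : p + 2 * (v * v) = u * u := by zify; linear_combination h
  have h2 : (p + 2 * (v * v)) % 8 = (u * u) % 8 := by rw [h']
  have hu : u % 8 < 8 := Nat.mod_lt _ (by norm_num)
  have hv : v % 8 < 8 := Nat.mod_lt _ (by norm_num)
  have hu2 : u % 2 = (u % 8) % 2 := by omega
  have hv2 : v % 2 = (v % 8) % 2 := by omega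
  rw [Nat.add_mod, Nat.mul_mod 2, Nat.mul_mod v v, Nat.mul_mod u u, hm] at h2
  rw [hu2, hv2]
  generalize u % 8 = a at *
  generalize v % 8 = b at *
  clear h h' hu2 hv2
  interval_cases a <;> interval_cases b <;> simp_all

lemma p_mod16 (hm : p % 8 = 7) {u v : ℕ} (h : (p : ℤ) = u ^ 2 - 2 * v ^ 2) :
    (u % 8 = 1 ∨ u % 8 = 7) ↔ p % 16 = 15 := by
  obtain ⟨hu, hv⟩ := uv_odd hm h
  have h1 := odd_sq_mod u hu
  have h2 := odd_sq_mod v hv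
  generalize (u : ℤ) ^ 2 = U at *
  generalize (v : ℤ) ^ 2 = V at *
  split_ifs at h1 with hc <;> split_ifs at h2 <;> simp only [hc, true_iff, false_iff] <;> omega

lemma sign_conv (hm : p % 16 = 15) {u v : ℕ} (h : (p : ℤ) = u ^ 2 - 2 * v ^ 2) :
    (-1 : ℤ) ^ ((p + 1) / 16) * J(2 | v) = if u % 16 = 1 ∨ u % 16 = 15 then 1 else -1 := by
  obtain ⟨hu, hv⟩ := uv_odd (by omega) h
  have hu8 := (p_mod16 (by omega) h).mpr hm
  have h2 := odd_sq_mod v hv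
  rw [jac_two v hv]
  have h1 : (u : ℤ) ^ 2 % 32 = if u % 16 = 1 ∨ u % 16 = 15 then 1 else 17 := by
    have hc : u % 16 = 1 ∨ u % 16 = 15 ∨ u % 16 = 7 ∨ u % 16 = 9 := by omega
    have : ∃ k : ℤ, (u : ℤ) = 16 * k + (u % 16 : ℕ) := ⟨(u / 16 : ℕ), by omega⟩
    obtain ⟨k, hk⟩ := this
    have hsq : (u : ℤ) ^ 2 = 32 * (8 * k ^ 2 + k * (u % 16 : ℕ)) + ((u % 16 : ℕ) : ℤ) ^ 2 := by
      conv_lhs => rw [hk]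
      ring
    rw [hsq]
    generalize 8 * k ^ 2 + k * (u % 16 : ℕ) = r
    rcases hc with hc | hc | hc | hc <;> rw [hc] <;> norm_num
  generalize (u : ℤ) ^ 2 = U at *
  generalize (v : ℤ) ^ 2 = V at *
  split_ifs at h1 h2 ⊢
  · have : Even ((p + 1) / 16) := by rw [Nat.even_iff]; omega
    rw [this.neg_one_pow]; norm_num
  · have : Odd ((p + 1) / 16) := by rw [Nat.odd_iff]; omega
    rw [this.neg_one_pow]; norm_num
  · have : Odd ((p + 1) / 16) := by rw [Nat.odd_iff]; omega
    rw [this.neg_one_pow]; norm_num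
  · have : Even ((p + 1) / 16) := by rw [Nat.even_iff]; omega
    rw [this.neg_one_pow]; norm_num

section cls2
variable [IsDedekindDomain (ZR p)]

lemma I_sq (hp : p.Prime) (hm : p % 8 = 7) {u v : ℕ} (hu : 0 < u)
    (h : (p : ℤ) = u ^ 2 - 2 * v ^ 2) :
    PI p u (2 * v) * PI p u (2 * v) * PI p 2 0 = span {(⟨2 * v, 1⟩ : ZR p)} := by
  have hab : (u : ℤ) ∣ (2 * v : ℤ) ^ 2 + 2 * p := ⟨2 * u, by rw [h]; ring⟩
  have hN : HasN (PI p u (2 * v)) u := hasN_PI hp (by omega) (by exact_mod_cast hu) hab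
  have h2 : HasN (PI p 2 0) 2 := hasN_PI hp (by omega) (by norm_num) (by simp)
  have hα : (⟨2 * v, 1⟩ : ZR p) ≠ 0 := by simp [Zsqrtd.ext_iff]
  have hαN := hasN_span hp.pos hα
  have hn : (⟨2 * v, 1⟩ : ZR p).norm = u * u * 2 := by
    rw [Zsqrtd.norm_def]; simp only; rw [h]; ring
  rw [hn] at hαN
  refine eq_of_le_norm hp (by omega) ((hN.mul hN).mul h2) hαN ?_
  unfold PI
  rw [Ideal.span_mul_span', Ideal.span_mul_span', Ideal.span_le]
  rintro _ ⟨_, ⟨x, hx, y, hy, rfl⟩, z, hz, rfl⟩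
  simp only [Set.mem_insert_iff, Set.mem_singleton_iff] at hx hy hz
  rw [SetLike.mem_coe, Ideal.mem_span_singleton]
  change _ ∣ x * y * z
  rcases hx with rfl | rfl
  · rcases hy with rfl | rfl
    · rcases hz with rfl | rfl
      · refine ⟨⟨2 * v, -1⟩, ?_⟩
        rw [Zsqrtd.ext_iff]; simp; rw [h]; ring
      · refine ⟨⟨p, v⟩, ?_⟩
        rw [Zsqrtd.ext_iff]; simp; rw [h]; constructor <;> ring
    · exact (dvd_mul_left _ _).mul_right _
  · exact (dvd_mul_right _ _).mul_right _

lemma key_rep (hp : p.Prime) (hm : p % 8 = 7) {u v : ℕ} (hu : 0 < u) (hv : 0 < v)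
    (hu8 : u % 8 = 1 ∨ u % 8 = 7)
    (h : (p : ℤ) = u ^ 2 - 2 * v ^ 2) (i k : ClassGroup (ZR p)) (hi : ClRep i (PI p u (2 * v)))
    (hik : i * (k * k) = 1) :
    ∃ (w : ℕ) (b : ℤ), w % 2 = 1 ∧ (w : ℤ) ∣ b ^ 2 + 2 * p ∧ ClRep k (PI p w b) ∧
      J(2 | w) = (if u % 16 = 1 ∨ u % 16 = 15 then 1 else -1) * J(u | v) := by
  have hp0 := hp.pos
  obtain ⟨-, hvo⟩ := uv_odd hm h
  have hM : (2 * p * u * v : ℤ) ≠ 0 := by positivity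
  obtain ⟨w, b, hw, hwb, hcop, hK⟩ := exists_coprime_rep hp k _ hM
  obtain ⟨w, rfl⟩ := Int.eq_ofNat_of_zero_le hw.le
  have hcon : ∀ q : ℤ, Prime q → q ∣ w → q ∣ 2 * p * u * v → False := by
    intro q hq h1 h2
    exact hq.not_isUnit (hcop.isUnit_of_dvd' h1 h2)
  have hwo : w % 2 = 1 := by
    by_contra h0
    exact hcon 2 Int.prime_two (by omega) ⟨p * u * v, by ring⟩
  refine ⟨w, b, hwo, hwb, hK, ?_⟩
  have hab : (u : ℤ) ∣ (2 * v : ℤ) ^ 2 + 2 * p := ⟨2 * u, by rw [h]; ring⟩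
  have hN : HasN (PI p u (2 * v)) u := hasN_PI hp (by omega) (by exact_mod_cast hu) hab
  have hKN := hasN_PI hp (by omega) hw hwb
  have h1 := hi.mul (hK.mul hK)
  rw [hik] at h1
  obtain ⟨⟨x, y⟩, hβ0, hβ⟩ := h1.principal
  have hmem : (⟨x, y⟩ : ZR p) ∈ PI p u (2 * v) := by
    have : (⟨x, y⟩ : ZR p) ∈ PI p u (2 * v) * (PI p w b * PI p w b) := by
      rw [hβ]; exact Ideal.mem_span_singleton_self _
    exact (Ideal.mul_le_left : PI p u (2 * v) * (PI p w b * PI p w b) ≤ PI p u (2 * v)) this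
  rw [mem_PI hab] at hmem
  obtain ⟨s, hs⟩ := hmem
  have hnorm : (u : ℤ) * (w * w) = x * x + 2 * p * (y * y) := by
    have h2 := hN.mul (hKN.mul hKN)
    rw [hβ] at h2
    have h3 := h2.unique (hasN_span hp.pos hβ0)
    rw [Zsqrtd.norm_def] at h3
    simp only at h3
    linarith
  have hx : x = 2 * v * y + u * s := by linear_combination hs
  have hwsq : (w : ℤ) ^ 2 = u * s ^ 2 + 4 * v * s * y + 2 * u * y ^ 2 := by
    have hu0 : (u : ℤ) ≠ 0 := by positivity
    apply mul_left_cancel₀ hu0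
    rw [hx, h] at hnorm
    linear_combination hnorm
  have hsy : IsCoprime s y := by
    rw [Int.isCoprime_iff_gcd_eq_one]
    by_contra hne
    obtain ⟨q, hq, hqd⟩ := Nat.exists_prime_and_dvd hne
    have hqZ : Prime (q : ℤ) := Nat.prime_iff_prime_int.mp hq
    have hqs : (q : ℤ) ∣ s := (Int.natCast_dvd_natCast.mpr hqd).trans (Int.gcd_dvd_left ..)
    have hqy : (q : ℤ) ∣ y := (Int.natCast_dvd_natCast.mpr hqd).trans (Int.gcd_dvd_right ..)
    have hqw : (q : ℤ) ∣ w := by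
      apply hqZ.dvd_of_dvd_pow (n := 2)
      rw [hwsq]
      obtain ⟨s', rfl⟩ := hqs
      obtain ⟨y', rfl⟩ := hqy
      exact ⟨u * q * s' ^ 2 + 4 * v * q * s' * y' + 2 * u * q * y' ^ 2, by ring⟩
    have hqx : (q : ℤ) ∣ x := by
      rw [hx]; exact dvd_add (hqy.mul_left _) (hqs.mul_left _)
    have hqβ : ((q : ℤ) : ZR p) ∣ ⟨x, y⟩ := (Zsqrtd.intCast_dvd _ _).mpr ⟨hqx, hqy⟩
    have hmem2 : ((u : ℤ) : ZR p) * (⟨b, 1⟩ * ⟨b, 1⟩) ∈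
        PI p u (2 * v) * (PI p w b * PI p w b) :=
      Ideal.mul_mem_mul (Ideal.subset_span (by simp))
        (Ideal.mul_mem_mul (Ideal.subset_span (by simp)) (Ideal.subset_span (by simp)))
    rw [hβ, Ideal.mem_span_singleton] at hmem2
    have h3 := (hqβ.trans hmem2)
    rw [Zsqrtd.intCast_dvd] at h3
    have h4 := h3.2
    simp at h4
    have h5 : (q : ℤ) ∣ u * (2 * b) := by convert h4 using 1; ring
    apply hcon q hqZ hqw
    rcases hqZ.dvd_or_dvd h5 with h6 | h6
    · exact h6.trans ⟨2 * p * v, by ring⟩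
    rcases hqZ.dvd_or_dvd h6 with h7 | h7
    · exact h7.trans ⟨p * u * v, by ring⟩
    have h8 : (q : ℤ) ∣ b ^ 2 + 2 * p := hqw.trans hwb
    have h9 : (q : ℤ) ∣ 2 * p :=
      (dvd_add_right (h7.trans (dvd_pow_self _ two_ne_zero))).mp h8
    exact h9.trans ⟨u * v, by ring⟩
  have hso : s % 2 = 1 := by
    rcases Int.emod_two_eq_zero_or_one s with h0 | h0
    · exfalso
      obtain ⟨d, rfl⟩ : (2 : ℤ) ∣ s := Int.dvd_of_emod_eq_zero h0
      have : (2 : ℤ) ∣ (w : ℤ) ^ 2 := by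
        rw [hwsq]; exact ⟨2 * u * d ^ 2 + 4 * v * d * y + u * y ^ 2, by ring⟩
      have := Int.prime_two.dvd_of_dvd_pow this
      omega
    · exact h0
  have hwv : Nat.Coprime w v := by
    rw [← Nat.isCoprime_iff_coprime]
    exact hcop.of_isCoprime_of_dvd_right ⟨2 * p * u, by ring⟩
  rcases Int.natAbs_eq s with hsa | hsa
  · rw [hsa] at hwsq hsy hso
    exact recip_key u v w s.natAbs y hwsq hvo hu8 hwo (by omega) hsy hwv
  · have e1 : (w : ℤ) ^ 2 = u * (s.natAbs : ℤ) ^ 2 + 4 * v * s.natAbs * (-y) + 2 * u * (-y) ^ 2 := by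
      rw [hwsq]
      have : (s.natAbs : ℤ) = - s := by omega
      rw [this]; ring
    refine recip_key u v w s.natAbs (-y) e1 hvo hu8 hwo (by omega) ?_ hwv
    have : (s.natAbs : ℤ) = - s := by omega
    rw [this]; exact hsy.neg_neg

lemma main_cls [Finite (ClassGroup (ZR p))] (hp : p.Prime) (hm : p % 8 = 7) {u v : ℕ} (hu : 0 < u)
    (hv : 0 < v) (h : (p : ℤ) = u ^ 2 - 2 * v ^ 2) :
    (8 ∣ Nat.card (ClassGroup (ZR p)) ∧ ¬ 16 ∣ Nat.card (ClassGroup (ZR p))) ↔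
      (p % 16 = 15 ∧ (-1 : ℤ) ^ ((p + 1) / 16) * jacobiSym (2 * u) v = -1) := by
  have hab : (u : ℤ) ∣ (2 * v : ℤ) ^ 2 + 2 * p := ⟨2 * u, by rw [h]; ring⟩
  have hN : HasN (PI p u (2 * v)) u := hasN_PI hp (by omega) (by exact_mod_cast hu) hab
  have h2 : HasN (PI p 2 0) 2 := hasN_PI hp (by omega) (by norm_num) (by simp)
  obtain ⟨i, hi⟩ := rep_exists hN.ne
  obtain ⟨c, hc⟩ := rep_exists h2.ne
  obtain ⟨huo, hvo⟩ := uv_odd hm h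
  have hc1 := c_ne_one hp hm c hc
  have hinv := involutions hp (by omega) c hc
  have hcc : c * c = 1 := by
    have := hc.mul hc
    rw [P2_sq hp (by omega)] at this
    exact this.unique (rep_one_span (by norm_num))
  have hiic : i * i * c = 1 := by
    have := (hi.mul hi).mul hc
    rw [I_sq hp hm hu h] at this
    exact this.unique (rep_one_span (by simp [Zsqrtd.ext_iff]))
  have hic : i ^ 2 = c := by
    rw [sq]; exact mul_right_cancel (hiic.trans hcc.symm)
  have hoi : orderOf i = 2 ^ 2 := by
    apply orderOf_eq_prime_pow
    · simpa [hic] using hc1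
    · rw [show 2 ^ (1 + 1) = 2 * 2 from rfl, pow_mul, hic, sq, hcc]
  have hisq := genus_iff hp hm hi hN (by omega)
  have hisq' : IsSquare i ↔ p % 16 = 15 := by
    rw [hisq, ← p_mod16 hm h]; omega
  by_cases hp16 : p % 16 = 15
  · have his := hisq'.mpr hp16
    have h8 : 8 ∣ Nat.card (ClassGroup (ZR p)) := grp_sq_dvd 1 i hoi his
    obtain ⟨t, ht⟩ := his
    have hik : i * (t⁻¹ * t⁻¹) = 1 := by rw [ht]; group
    obtain ⟨w, b, hwo, hwb, hk, hJ⟩ :=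
      key_rep hp hm hu hv ((p_mod16 hm h).mpr hp16) h i t⁻¹ hi hik
    have hk2 : (t⁻¹) ^ 2 = i⁻¹ := by rw [ht, sq]; group
    have hok : orderOf t⁻¹ = 2 ^ 3 := by
      apply orderOf_eq_prime_pow
      · rw [show 2 ^ 2 = 2 * 2 from rfl, pow_mul, hk2, inv_pow, hic, inv_eq_one]
        exact hc1
      · rw [show 2 ^ (2 + 1) = 2 * (2 * 2) from rfl, pow_mul, hk2, pow_mul, inv_pow, hic, inv_pow,
          sq, hcc, inv_one]
    have hw0 : 0 < w := by omega
    have hwN : HasN (PI p w b) w := hasN_PI hp (by omega) (by exact_mod_cast hw0) hwb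
    have hksq := genus_iff hp hm hk hwN (by omega)
    have hval : (-1 : ℤ) ^ ((p + 1) / 16) * jacobiSym (2 * u) v = J(2 | w) := by
      rw [jacobiSym.mul_left, ← mul_assoc, sign_conv hp16 h, hJ]
    have h16 : 16 ∣ Nat.card (ClassGroup (ZR p)) ↔ IsSquare t⁻¹ := by
      constructor
      · intro h'
        by_contra hns
        exact grp_nonsq_not_dvd 3 t⁻¹ hok (fun g => grp_index_two c hinv t⁻¹ g hns) h'
      · intro hs
        exact grp_sq_dvd 2 t⁻¹ hok hs
    rw [hval, jac_two w hwo, h16, hksq]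
    simp only [h8, hp16, true_and]
    have : ((w : ℤ) % 8 = 1 ∨ (w : ℤ) % 8 = 7) ↔ (w % 8 = 1 ∨ w % 8 = 7) := by omega
    rw [this]
    split_ifs with hcond <;> simp [hcond]
  · have hns : ¬ IsSquare i := fun hs => hp16 (hisq'.mp hs)
    have h8 : ¬ 8 ∣ Nat.card (ClassGroup (ZR p)) :=
      grp_nonsq_not_dvd 2 i hoi (fun g => grp_index_two c hinv i g hns)
    simp [h8, hp16]

end cls2

end PartH

open Polynomial NumberField

/-- **Leonard–Williams.** For a prime `p ≡ -1 (mod 8)`, writing `h(-2p)`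
for the class number of `ℚ(√(-2p)) = ℚ[x]/(x² + 2p)`, one has `8 ∥ h(-2p)` if and only if
`p ≡ -1 (mod 16)` and `(-1)^((p+1)/16) · (p) = -1`, where `(p)` is the Jacobi symbol
`(2u/v)` for any positive integers `u, v` with `p = u² - 2v²`. -/
theorem eight_exactly_divides_classNumber_neg_two_p_iff
    (p : ℕ) (hp : p.Prime) (hmod : p % 8 = 7)
    (F : Type*) [Field F] [NumberField F]
    (hF : Nonempty (F ≃ₐ[ℚ] AdjoinRoot (X ^ 2 + C (2 * p : ℚ)))) :
    (8 ∣ classNumber F ∧ ¬ 16 ∣ classNumber F) ↔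
      (p % 16 = 15 ∧
        ∀ u v : ℕ, 0 < u → 0 < v → (p : ℤ) = u ^ 2 - 2 * v ^ 2 →
          (-1 : ℤ) ^ ((p + 1) / 16) * jacobiSym (2 * u) v = -1) := by
  have hdom : IsDomain (ZR p) := ZR_noZeroDiv hp.pos
  obtain ⟨e⟩ := ringOfIntegers_equiv p hp hmod F hF
  have hded : IsDedekindDomain (ZR p) := isDedekind_of_equiv e
  have E : ClassGroup (𝓞 F) ≃* ClassGroup (ZR p) := ClassGroup.mulEquiv e
  have hfin : Finite (ClassGroup (ZR p)) := Finite.of_equiv _ E.toEquiv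
  have hcard : classNumber F = Nat.card (ClassGroup (ZR p)) := by
    rw [classNumber, ← Nat.card_eq_fintype_card]
    exact Nat.card_congr E.toEquiv
  rw [hcard]
  constructor
  · intro h
    obtain ⟨u, v, hu, hv, huv⟩ := exists_rep p hp hmod
    refine ⟨((main_cls hp hmod hu hv huv).mp h).1, ?_⟩
    intro u v hu hv huv
    exact ((main_cls hp hmod hu hv huv).mp h).2
  · rintro ⟨h1, h2⟩
    obtain ⟨u, v, hu, hv, huv⟩ := exists_rep p hp hmod
    exact (main_cls hp hmod hu hv huv).mpr ⟨h1, h2 u v hu hv huv⟩
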